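/- arXiv:1705.01270 — 5 statements merged into one kernel-verified Lean document; each statement's English description precedes it below -/
import Mathlib

section
/- Let (X, 𝔄) be a measurable space with a positive measure m and α : X → X a measurable map, and let A be the linear shift operator mapping a measurable function f to f ∘ α. Then A is bounded on L¹(X, m) if and only if there exists a positive constant C such that m(α⁻¹(G)) ≤ C·m(G) for every measurable set G ∈ 𝔄, and in that case ‖A‖ ≤ C. -/
open MeasureTheory Filter
open scoped ENNReal NNReal

noncomputable section

theorem shift_aux_map_le {X : Type*} [MeasurableSpace X] {m : Measure X} {α : X → X}
    (hα : Measurable α) {C : ℝ≥0}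
    (h : ∀ G : Set X, MeasurableSet G → m (α ⁻¹' G) ≤ (C : ℝ≥0∞) * m G) :
    m.map α ≤ (C : ℝ≥0∞) • m := by
  refine Measure.le_iff.2 fun G hG => ?_
  rw [Measure.map_apply hα hG]
  simpa using h G hG

theorem shift_aux_integrable {X : Type*} [MeasurableSpace X] {m : Measure X} {α : X → X}
    (hα : Measurable α) {C : ℝ≥0} (h : m.map α ≤ (C : ℝ≥0∞) • m)
    {f : X → ℝ} (hf : Integrable f m) : Integrable (f ∘ α) m :=
  (hf.of_measure_le_smul ENNReal.coe_ne_top h).comp_measurable hα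

theorem shift_aux_ae {X : Type*} [MeasurableSpace X] {m : Measure X} {α : X → X}
    (hα : Measurable α) {C : ℝ≥0} (h : m.map α ≤ (C : ℝ≥0∞) • m)
    {f g : X → ℝ} (hfg : f =ᵐ[m] g) : f ∘ α =ᵐ[m] g ∘ α := by
  have hac : m.map α ≪ m := Measure.absolutelyContinuous_of_le_smul h
  exact ae_of_ae_map hα.aemeasurable (hac.ae_le hfg)

theorem shift_aux_norm {X : Type*} [MeasurableSpace X] {m : Measure X} {α : X → X}
    (hα : Measurable α) {C : ℝ≥0} (h : m.map α ≤ (C : ℝ≥0∞) • m)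
    {f : X → ℝ} (hf : Integrable f m) :
    ∫ x, ‖(f ∘ α) x‖ ∂m ≤ C * ∫ x, ‖f x‖ ∂m := by
  have hi := hf.of_measure_le_smul ENNReal.coe_ne_top h
  have h1 : ∫ x, ‖(f ∘ α) x‖ ∂m = ∫ x, ‖f x‖ ∂(m.map α) :=
    (integral_map hα.aemeasurable hi.norm.aestronglyMeasurable).symm
  rw [h1]
  refine (integral_mono_measure h (ae_of_all _ fun x => norm_nonneg _)
    (hf.norm.smul_measure ENNReal.coe_ne_top)).trans ?_
  rw [integral_smul_measure]
  simp

/-- **Boundedness criterion for the shift operator**: the linear shift operator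
`A f = f ∘ α` is bounded on `L¹(X, m)` (i.e. there is a bounded linear operator `A` on
`L¹(X, m)` sending (the class of) every integrable measurable `f` to (the class of)
`f ∘ α`) if and only if there exists a constant `C > 0` such that
`m (α⁻¹ G) ≤ C · m G` for every measurable set `G`; and in that case `‖A‖ ≤ C`. -/
theorem shiftOperator_bounded_iff
    {X : Type*} [MeasurableSpace X] (m : Measure X) (α : X → X)
    (hα : Measurable α) :
    ((∃ A : Lp ℝ 1 m →L[ℝ] Lp ℝ 1 m,
        ∀ (f : X → ℝ) (hf : Integrable f m), Measurable f →
          ⇑(A (hf.toL1 f)) =ᵐ[m] f ∘ α) ↔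
      ∃ C : ℝ≥0, 0 < C ∧ ∀ G : Set X, MeasurableSet G → m (α ⁻¹' G) ≤ (C : ℝ≥0∞) * m G) ∧
    (∀ C : ℝ≥0, 0 < C →
      (∀ G : Set X, MeasurableSet G → m (α ⁻¹' G) ≤ (C : ℝ≥0∞) * m G) →
      ∀ A : Lp ℝ 1 m →L[ℝ] Lp ℝ 1 m,
        (∀ (f : X → ℝ) (hf : Integrable f m), Measurable f →
          ⇑(A (hf.toL1 f)) =ᵐ[m] f ∘ α) →
        ‖A‖ ≤ (C : ℝ)) := by
  refine ⟨⟨?_, ?_⟩, ?_⟩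
  · rintro ⟨A, hA⟩
    refine ⟨‖A‖₊ + 1, by positivity, fun G hG => ?_⟩
    by_cases hm : m G = ∞
    · rw [hm, ENNReal.mul_top (by positivity)]
      exact le_top
    have hf : Integrable (G.indicator (fun _ => (1 : ℝ))) m :=
      (integrable_indicator_iff hG).2 (integrableOn_const hm)
    have h1 := hA _ hf (measurable_const.indicator hG)
    have h2 : ‖A (hf.toL1 _)‖ₑ ≤ ‖A‖ₑ * ‖hf.toL1 _‖ₑ := by
      exact A.le_opENorm _
    rw [Lp.enorm_def, Lp.enorm_def, eLpNorm_congr_ae h1, eLpNorm_congr_ae hf.coeFn_toL1,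
      eLpNorm_one_eq_lintegral_enorm, eLpNorm_one_eq_lintegral_enorm] at h2
    have e1 : ∀ x, ‖(G.indicator (fun _ => (1 : ℝ)) ∘ α) x‖ₑ
        = (α ⁻¹' G).indicator (fun _ => (1 : ℝ≥0∞)) x := by
      intro x
      by_cases hx : α x ∈ G <;> simp [hx]
    have e2 : ∀ x, ‖G.indicator (fun _ => (1 : ℝ)) x‖ₑ
        = G.indicator (fun _ => (1 : ℝ≥0∞)) x := by
      intro x
      by_cases hx : x ∈ G <;> simp [hx]
    simp only [e1, e2] at h2
    rw [lintegral_indicator_const (hα hG), lintegral_indicator_const hG, one_mul, one_mul] at h2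
    refine h2.trans ?_
    gcongr
    rw [enorm_eq_nnnorm]
    exact_mod_cast le_self_add
  · rintro ⟨C, -, hC⟩
    have h := shift_aux_map_le hα hC
    have hi : ∀ f : Lp ℝ 1 m, Integrable (f ∘ α) m := fun f =>
      shift_aux_integrable hα h (L1.integrable_coeFn f)
    let L : Lp ℝ 1 m →ₗ[ℝ] Lp ℝ 1 m :=
      { toFun := fun f => (hi f).toL1 _
        map_add' := fun f g => by
          rw [← Integrable.toL1_add, Integrable.toL1_eq_toL1_iff]
          exact shift_aux_ae hα h (Lp.coeFn_add f g)
        map_smul' := fun c f => by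
          rw [RingHom.id_apply, ← Integrable.toL1_smul, Integrable.toL1_eq_toL1_iff]
          exact shift_aux_ae hα h (Lp.coeFn_smul c f) }
    refine ⟨L.mkContinuous C fun f => ?_, fun f hf _ => ?_⟩
    · rw [L1.norm_eq_integral_norm, L1.norm_eq_integral_norm f]
      refine le_trans (le_of_eq (integral_congr_ae ?_))
        (shift_aux_norm hα h (L1.integrable_coeFn f))
      filter_upwards [(hi f).coeFn_toL1] with x hx
      exact congrArg norm hx
    · exact ((hi (hf.toL1 f)).coeFn_toL1).trans (shift_aux_ae hα h hf.coeFn_toL1)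
  · intro C _ hC A hA
    have h := shift_aux_map_le hα hC
    refine A.opNorm_le_bound C.2 fun f => ?_
    have hm : Measurable (f : X → ℝ) := (Lp.stronglyMeasurable f).measurable
    have h1 := hA f (L1.integrable_coeFn f) hm
    rw [Integrable.toL1_coeFn] at h1
    rw [L1.norm_eq_integral_norm, L1.norm_eq_integral_norm f]
    refine le_trans (le_of_eq (integral_congr_ae ?_))
      (shift_aux_norm hα h (L1.integrable_coeFn f))
    filter_upwards [h1] with x hx
    exact congrArg norm hx
end
end

section
/- For any φ ∈ L^∞(X, m), any α-invariant measure μ ∈ M_α(X, m), any natural number n and any ε > 0, there exists a measurable partition of unity D on X such that ε + (1/n)·ln‖A_φⁿ‖ ≥ μ[φ] + (1/n)·τₙ(μ, D). -/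
open MeasureTheory Filter
open scoped ENNReal NNReal

noncomputable section

/-- The Birkhoff sum `S_n φ (x) = φ(x) + φ(α x) + ⋯ + φ(α^{n-1} x)`. -/
def birkhoff {X : Type*} (α : X → X) (φ : X → ℝ) (n : ℕ) (x : X) : ℝ :=
  ∑ i ∈ Finset.range n, φ (α^[i] x)

/-- Boundedness of the shift operator `A f = f ∘ α` on `L¹(X, m)`:
there is `C > 0` with `m (α⁻¹ G) ≤ C · m G` for all measurable `G`. -/
def ShiftBounded {X : Type*} [MeasurableSpace X] (m : Measure X) (α : X → X) : Prop :=
  ∃ C : ℝ≥0, 0 < C ∧ ∀ G : Set X, MeasurableSet G → m (α ⁻¹' G) ≤ (C : ℝ≥0∞) * m G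

/-- The operator norm `‖(e^ψ A^s)^k‖` of the `k`-th power of the weighted shift operator
`e^ψ A^s` (with base shift `α^[s]`) acting on `L¹(X, m)`, computed as the supremum of
`‖(e^ψ A^s)^k f‖₁` over `f` with `‖f‖₁ = 1`. -/
def weightedOpNorm {X : Type*} [MeasurableSpace X] (m : Measure X) (α : X → X) (s : ℕ)
    (ψ : X → ℝ) (k : ℕ) : ℝ :=
  sSup {r : ℝ | ∃ f : X → ℝ, Integrable f m ∧ (∫ x, |f x| ∂m) = 1 ∧
    r = ∫ x, Real.exp (∑ j ∈ Finset.range k, ψ (α^[s * j] x)) * |f (α^[s * k] x)| ∂m}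

/-- `λ(ψ, A^s)`: the logarithm of the spectral radius of `e^ψ A^s` on `L¹(X, m)`. -/
def spectralPotentialBase {X : Type*} [MeasurableSpace X] (m : Measure X) (α : X → X)
    (s : ℕ) (ψ : X → ℝ) : ℝ :=
  limUnder atTop fun k : ℕ => Real.log (weightedOpNorm m α s ψ k) / (k : ℝ)

/-- The spectral potential `λ(φ) = lim (1/n) ln ‖A_φⁿ‖`. -/
def spectralPotential {X : Type*} [MeasurableSpace X] (m : Measure X) (α : X → X)
    (φ : X → ℝ) : ℝ :=
  spectralPotentialBase m α 1 φ

/-- A functional on `L^∞(X, m)` is positive if it is nonnegative on nonnegative functions. -/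
def IsPositiveFunctional {X : Type*} [MeasurableSpace X] (m : Measure X)
    (μ : Lp ℝ ⊤ m → ℝ) : Prop :=
  ∀ φ : Lp ℝ ⊤ m, (0 : X → ℝ) ≤ᵐ[m] ⇑φ → 0 ≤ μ φ

/-- A functional on `L^∞(X, m)` is normalized if its value on the unit function is `1`. -/
def IsNormalizedFunctional {X : Type*} [MeasurableSpace X] (m : Measure X)
    (μ : Lp ℝ ⊤ m → ℝ) : Prop :=
  ∀ φ : Lp ℝ ⊤ m, ⇑φ =ᵐ[m] (fun _ => (1 : ℝ)) → μ φ = 1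

/-- A functional `μ` on `L^∞(X, m)` is `α`-invariant if `μ[f ∘ α] = μ[f]`. -/
def IsInvariantFunctional {X : Type*} [MeasurableSpace X] (m : Measure X) (α : X → X)
    (μ : Lp ℝ ⊤ m → ℝ) : Prop :=
  ∀ φ ψ : Lp ℝ ⊤ m, ⇑ψ =ᵐ[m] (fun x => φ (α x)) → μ ψ = μ φ

/-- `μ ∈ M_α(X, m)`: positive, normalized and `α`-invariant. -/
def MemMalpha {X : Type*} [MeasurableSpace X] (m : Measure X) (α : X → X)
    (μ : Lp ℝ ⊤ m → ℝ) : Prop :=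
  IsPositiveFunctional m μ ∧ IsNormalizedFunctional m μ ∧ IsInvariantFunctional m α μ

/-- A measurable partition of unity on `X` made of nonnegative elements of `L^∞(X, m)`
summing to `1`. -/
structure PartUnity {X : Type*} [MeasurableSpace X] (m : Measure X) where
  k : ℕ
  g : Fin k → Lp ℝ ⊤ m
  nonneg : ∀ i, (0 : X → ℝ) ≤ᵐ[m] ⇑(g i)
  sum_one : ∀ᵐ x ∂m, (∑ i, (g i : Lp ℝ ⊤ m) x) = 1

/-- The summand `a · ln (r / a)` with the conventions: it is `0` if `a = 0`, and `-∞` if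
`a ≠ 0` and `r = 0`. -/
def entTerm (a r : ℝ) : EReal :=
  if a = 0 then 0 else if r = 0 then ⊥ else ((a * Real.log (r / a) : ℝ) : EReal)

/-- `τₙ(μ, D)`. -/
def tauN {X : Type*} [MeasurableSpace X] (m : Measure X) (α : X → X)
    (μ : Lp ℝ ⊤ m → ℝ) (n : ℕ) (D : PartUnity m) : EReal :=
  sSup {r : EReal | ∃ f : X → ℝ, Integrable f m ∧ (∫ x, |f x| ∂m) = 1 ∧
    r = ∑ i, entTerm (μ (D.g i)) (∫ x, (D.g i : Lp ℝ ⊤ m) x * |f (α^[n] x)| ∂m)}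

/-- The t-entropy `τ(μ) = inf_{n, D} τₙ(μ, D) / n`. -/
def tEntropy {X : Type*} [MeasurableSpace X] (m : Measure X) (α : X → X)
    (μ : Lp ℝ ⊤ m → ℝ) : EReal :=
  ⨅ (n : ℕ) (_ : 0 < n) (D : PartUnity m), (((n : ℝ)⁻¹ : ℝ) : EReal) * tauN m α μ n D

/-- The t-entropy extended by `τ(μ) = -∞` outside `M_α(X, m)`. -/
def tEntropyExt {X : Type*} [MeasurableSpace X] (m : Measure X) (α : X → X)
    (μ : Lp ℝ ⊤ m → ℝ) : EReal :=
  @ite _ (MemMalpha m α μ) (Classical.dec _) (tEntropy m α μ) ⊥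


lemma aux_bound {X : Type*} [MeasurableSpace X] {m : Measure X} (f : Lp ℝ ⊤ m) :
    ∀ᵐ x ∂m, ‖f x‖ ≤ ‖f‖ := by
  filter_upwards [ae_le_eLpNormEssSup (f := ⇑f) (μ := m)] with x hx
  rw [← eLpNorm_exponent_top] at hx
  have := ENNReal.toReal_mono (Lp.eLpNorm_ne_top f) hx
  rwa [toReal_enorm, ← Lp.norm_def] at this

lemma aux_coe_sum {ι : Type*} (s : Finset ι) (f : ι → ℝ) :
    ((∑ i ∈ s, f i : ℝ) : EReal) = ∑ i ∈ s, (f i : EReal) := by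
  classical
  induction s using Finset.induction_on with
  | empty => simp
  | insert a s ha ih => rw [Finset.sum_insert ha, Finset.sum_insert ha, EReal.coe_add, ih]

lemma aux_map_le {X : Type*} [MeasurableSpace X] (m : Measure X) (α : X → X)
    (hα : Measurable α) (hbdd : ShiftBounded m α) (n : ℕ) :
    ∃ C : ℝ≥0, Measure.map (α^[n]) m ≤ (C : ℝ≥0∞) • m := by
  obtain ⟨C, -, hC⟩ := hbdd
  refine ⟨C ^ n, ?_⟩
  refine Measure.le_iff.2 fun G hG => ?_
  rw [Measure.map_apply (hα.iterate n) hG]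
  simp only [Measure.smul_apply, smul_eq_mul]
  induction n generalizing G with
  | zero => simp
  | succ k ih =>
    rw [Function.iterate_succ', Set.preimage_comp]
    refine (ih _ (hα hG)).trans ?_
    calc ((C ^ k : ℝ≥0) : ℝ≥0∞) * m (α ⁻¹' G)
        ≤ ((C ^ k : ℝ≥0) : ℝ≥0∞) * ((C : ℝ≥0∞) * m G) := by gcongr; exact hC G hG
      _ = _ := by rw [← mul_assoc, pow_succ]; push_cast; rfl

lemma aux_qmp {X : Type*} [MeasurableSpace X] (m : Measure X) (α : X → X)
    (hα : Measurable α) (hbdd : ShiftBounded m α) :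
    Measure.QuasiMeasurePreserving α m m := by
  obtain ⟨C, hC⟩ := aux_map_le m α hα hbdd 1
  rw [Function.iterate_one] at hC
  exact ⟨hα, (Measure.absolutelyContinuous_of_le_smul hC)⟩

lemma aux_int {X : Type*} [MeasurableSpace X] (m : Measure X) (α : X → X)
    (hα : Measurable α) (hbdd : ShiftBounded m α) (n : ℕ) :
    ∃ C : ℝ, ∀ f : X → ℝ, Integrable f m → (∫ x, |f x| ∂m) = 1 →
      Integrable (fun x => |f (α^[n] x)|) m ∧ ∫ x, |f (α^[n] x)| ∂m ≤ C := by
  obtain ⟨C, hC⟩ := aux_map_le m α hα hbdd n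
  refine ⟨C, fun f hf h1 => ?_⟩
  have hCm : Integrable (fun x => |f x|) ((C : ℝ≥0∞) • m) :=
    hf.abs.smul_measure ENNReal.coe_ne_top
  have hmap : Integrable (fun x => |f x|) (Measure.map (α^[n]) m) := hCm.mono_measure hC
  refine ⟨hmap.comp_measurable (hα.iterate n), ?_⟩
  have := integral_map (μ := m) (hα.iterate n).aemeasurable hmap.aestronglyMeasurable
  rw [← this]
  refine (integral_mono_measure hC (ae_of_all _ fun x => abs_nonneg _) hCm).trans ?_
  rw [integral_smul_measure, h1]
  simp

lemma aux_iter {X : Type*} [MeasurableSpace X] (m : Measure X) (α : X → X)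
    (hα : Measurable α) (hbdd : ShiftBounded m α)
    (φ : Lp ℝ ⊤ m) (μ : Lp ℝ ⊤ m →L[ℝ] ℝ) (hμ : MemMalpha m α ⇑μ) (j : ℕ) :
    ∃ ψ : Lp ℝ ⊤ m, (⇑ψ =ᵐ[m] fun x => φ (α^[j] x)) ∧ μ ψ = μ φ := by
  have hq := aux_qmp m α hα hbdd
  induction j with
  | zero => exact ⟨φ, by simp, rfl⟩
  | succ k ih =>
    obtain ⟨ψ, h1, h2⟩ := ih
    have hb : ∀ᵐ x ∂m, ‖ψ x‖ ≤ ‖ψ‖ := aux_bound ψ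
    have hmem : MemLp (fun x => ψ (α x)) ⊤ m :=
      memLp_top_of_bound ((Lp.aestronglyMeasurable ψ).comp_quasiMeasurePreserving hq) ‖ψ‖
        (hq.ae hb)
    refine ⟨hmem.toLp _, ?_, ?_⟩
    · filter_upwards [hmem.coeFn_toLp, hq.ae h1] with x hx hx2
      rw [hx, hx2, Function.iterate_succ_apply]
    · rw [← h2]
      exact hμ.2.2 ψ _ hmem.coeFn_toLp

lemma aux_sum {X : Type*} [MeasurableSpace X] (m : Measure X) (α : X → X)
    (hα : Measurable α) (hbdd : ShiftBounded m α)
    (φ : Lp ℝ ⊤ m) (μ : Lp ℝ ⊤ m →L[ℝ] ℝ) (hμ : MemMalpha m α ⇑μ) (n : ℕ) :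
    ∃ S : Lp ℝ ⊤ m, (⇑S =ᵐ[m] fun x => ∑ j ∈ Finset.range n, φ (α^[j] x)) ∧
      μ S = n * μ φ := by
  induction n with
  | zero =>
    refine ⟨0, ?_, by simp⟩
    filter_upwards [Lp.coeFn_zero ℝ ⊤ m] with x hx
    simpa using hx
  | succ k ih =>
    obtain ⟨S, h1, h2⟩ := ih
    obtain ⟨ψ, h3, h4⟩ := aux_iter m α hα hbdd φ μ hμ k
    refine ⟨S + ψ, ?_, ?_⟩
    · filter_upwards [Lp.coeFn_add S ψ, h1, h3] with x hx hx1 hx3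
      rw [hx, Pi.add_apply, hx1, hx3, Finset.sum_range_succ]
    · rw [map_add, h2, h4]; push_cast; ring

lemma aux_coeFn_sum {X : Type*} [MeasurableSpace X] (m : Measure X) {ι : Type*}
    (s : Finset ι) (c : ι → ℝ) (g : ι → Lp ℝ ⊤ m) :
    ⇑(∑ i ∈ s, c i • g i) =ᵐ[m] fun x => ∑ i ∈ s, c i * g i x := by
  classical
  induction s using Finset.induction_on with
  | empty =>
    filter_upwards [Lp.coeFn_zero ℝ ⊤ m] with x hx
    simpa using hx
  | insert a s ha ih =>
    rw [Finset.sum_insert ha]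
    filter_upwards [Lp.coeFn_add (c a • g a) (∑ i ∈ s, c i • g i), ih,
      Lp.coeFn_smul (c a) (g a)] with x h1 h2 h3
    rw [h1, Pi.add_apply, h2, h3, Finset.sum_insert ha]
    simp

/-- Partition adapted to the level sets of `S`. -/
lemma aux_part {X : Type*} [MeasurableSpace X] (m : Measure X) (S : Lp ℝ ⊤ m)
    (δ : ℝ) (hδ : 0 < δ) :
    ∃ (D : PartUnity m) (c : Fin D.k → ℝ),
      (∀ᵐ x ∂m, S x ≤ ∑ i, (c i + δ) * D.g i x) ∧
      (∀ᵐ x ∂m, ∑ i, Real.exp (c i) * D.g i x ≤ Real.exp (S x)) := by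
  set M := ‖S‖ with hM
  have hb : ∀ᵐ x ∂m, ‖S x‖ ≤ M := aux_bound S
  set q : X → ℕ := fun x => ⌊(S x + M) / δ⌋₊ with hq
  have hqm : Measurable q :=
    Nat.measurable_floor.comp (((Lp.stronglyMeasurable S).measurable.add_const M).div_const δ)
  set k : ℕ := ⌊(2 * M) / δ⌋₊ + 1 with hk
  have hqk : ∀ᵐ x ∂m, q x < k := by
    filter_upwards [hb] with x hx
    refine Nat.lt_succ_of_le (Nat.floor_le_floor ?_)
    have := (abs_le.1 (by simpa using hx : |S x| ≤ M)).2
    gcongr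
    linarith
  set h : Fin k → X → ℝ := fun i => (q ⁻¹' {(i : ℕ)}).indicator (fun _ => 1) with hh
  have hmem : ∀ i, MemLp (h i) ⊤ m := fun i =>
    memLp_top_of_bound
      ((measurable_const.indicator (hqm (measurableSet_singleton _))).aestronglyMeasurable) 1
      (ae_of_all _ fun x => by
        simp only [hh, Set.indicator]
        split_ifs <;> simp)
  have hsum : ∀ᵐ x ∂m, ∀ c : Fin k → ℝ, ∃ i0 : Fin k, (i0 : ℕ) = q x ∧
      ∑ i, c i * ((hmem i).toLp (h i) : Lp ℝ ⊤ m) x = c i0 := by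
    have hall : ∀ᵐ x ∂m, ∀ i, ((hmem i).toLp (h i) : Lp ℝ ⊤ m) x = h i x :=
      ae_all_iff.2 fun i => (hmem i).coeFn_toLp
    filter_upwards [hall, hqk] with x hx hxk c
    refine ⟨⟨q x, hxk⟩, rfl, ?_⟩
    rw [Finset.sum_eq_single (⟨q x, hxk⟩ : Fin k)]
    · rw [hx]; simp [hh]
    · intro b _ hne
      rw [hx]
      have : q x ≠ (b : ℕ) := fun e => hne (Fin.ext e.symm)
      simp [hh, this]
    · simp
  refine ⟨⟨k, fun i => (hmem i).toLp (h i), ?_, ?_⟩, fun i => -M + δ * ((i : ℕ) : ℝ), ?_, ?_⟩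
  · intro i
    filter_upwards [(hmem i).coeFn_toLp] with x hx
    rw [hx]
    exact Set.indicator_nonneg (fun _ _ => zero_le_one) _
  · filter_upwards [hsum] with x hx
    obtain ⟨i0, -, h0⟩ := hx (fun _ => 1)
    simpa using h0
  · filter_upwards [hsum] with x hx
    obtain ⟨i0, h1, h0⟩ := hx (fun i => -M + δ * ((i : ℕ) : ℝ) + δ)
    refine le_of_le_of_eq ?_ h0.symm
    rw [h1]
    have := (Nat.lt_floor_add_one ((S x + M) / δ)).le
    rw [div_le_iff₀ hδ] at this
    change _ ≤ ((q x : ℝ) + 1) * δ at this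
    linarith
  · filter_upwards [hsum, hb] with x hx hbx
    obtain ⟨i0, h1, h0⟩ := hx (fun i => Real.exp (-M + δ * ((i : ℕ) : ℝ)))
    refine le_of_eq_of_le h0 ?_
    rw [h1, Real.exp_le_exp]
    have hnn : 0 ≤ S x + M := by
      have := (abs_le.1 (by simpa using hbx : |S x| ≤ M)).1
      linarith
    have := Nat.floor_le (div_nonneg hnn hδ.le)
    rw [le_div_iff₀ hδ] at this
    change (q x : ℝ) * δ ≤ _ at this
    linarith

lemma aux_ent (a r c L : ℝ) (ha : 0 ≤ a) (hr : 0 ≤ r) (hL : 0 < L) :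
    entTerm a r ≤ ((Real.exp c * r / L - a - a * c + a * Real.log L : ℝ) : EReal) := by
  unfold entTerm
  split_ifs with h1 h2
  · subst h1
    have : 0 ≤ Real.exp c * r / L := by positivity
    exact_mod_cast (by linarith)
  · exact bot_le
  · rw [EReal.coe_le_coe_iff]
    have ha' : 0 < a := lt_of_le_of_ne ha (Ne.symm h1)
    have hr' : 0 < r := lt_of_le_of_ne hr (Ne.symm h2)
    have key := Real.log_le_sub_one_of_pos (x := Real.exp c * (r / a) / L) (by positivity)
    rw [Real.log_div (by positivity) hL.ne', Real.log_mul (by positivity) (by positivity),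
      Real.log_exp] at key
    have k2 := mul_le_mul_of_nonneg_left key ha
    have : a * (Real.exp c * (r / a) / L - 1) = Real.exp c * r / L - a := by
      field_simp
    rw [this] at k2
    linarith

/-- **Lemma 3, inequality (10)**: for any `φ ∈ L^∞(X, m)`, `μ ∈ M_α(X, m)`, `n ∈ ℕ` and
`ε > 0` there is a measurable partition of unity `D` with
`ε + (1/n)·ln‖A_φⁿ‖ ≥ μ[φ] + (1/n)·τₙ(μ, D)`. -/
theorem exists_partition_young_ineq
    {X : Type*} [MeasurableSpace X] (m : Measure X) (α : X → X)
    (hα : Measurable α) (hbdd : ShiftBounded m α)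
    (φ : Lp ℝ ⊤ m) (μ : Lp ℝ ⊤ m →L[ℝ] ℝ) (hμ : MemMalpha m α ⇑μ)
    (n : ℕ) (hn : 0 < n) (ε : ℝ) (hε : 0 < ε) :
    ∃ D : PartUnity m,
      ((μ φ : ℝ) : EReal) + (((n : ℝ)⁻¹ : ℝ) : EReal) * tauN m α (⇑μ) n D ≤
        ((ε + Real.log (weightedOpNorm m α 1 (⇑φ) n) / (n : ℝ) : ℝ) : EReal) := by
  obtain ⟨S, hS, hμS⟩ := aux_sum m α hα hbdd φ μ hμ n
  have hn' : (0 : ℝ) < n := by exact_mod_cast hn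
  obtain ⟨D, c, hD1, hD2⟩ := aux_part m S (n * ε) (by positivity)
  obtain ⟨C, hC⟩ := aux_int m α hα hbdd n
  refine ⟨D, ?_⟩
  have hbS : ∀ᵐ x ∂m, ‖S x‖ ≤ ‖S‖ := aux_bound S
  have hexpm : AEStronglyMeasurable (fun x => Real.exp (S x)) m :=
    Real.continuous_exp.comp_aestronglyMeasurable (Lp.aestronglyMeasurable S)
  have hexpb : ∀ᵐ x ∂m, ‖Real.exp (S x)‖ ≤ Real.exp ‖S‖ := by
    filter_upwards [hbS] with x hx
    rw [Real.norm_of_nonneg (Real.exp_pos _).le, Real.exp_le_exp]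
    exact (le_abs_self _).trans hx
  have hrew : ∀ f : X → ℝ,
      ∫ x, Real.exp (∑ j ∈ Finset.range n, φ (α^[1 * j] x)) * |f (α^[1 * n] x)| ∂m
        = ∫ x, Real.exp (S x) * |f (α^[n] x)| ∂m := by
    intro f
    refine integral_congr_ae ?_
    filter_upwards [hS] with x hx
    simp only [one_mul]
    rw [hx]
  have hint : ∀ f : X → ℝ, Integrable f m → (∫ x, |f x| ∂m) = 1 →
      Integrable (fun x => Real.exp (S x) * |f (α^[n] x)|) m := fun f hf h1 =>
    (hC f hf h1).1.bdd_mul hexpm hexpb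
  have hle : ∀ f : X → ℝ, Integrable f m → (∫ x, |f x| ∂m) = 1 →
      ∫ x, Real.exp (S x) * |f (α^[n] x)| ∂m ≤ weightedOpNorm m α 1 (⇑φ) n := by
    intro f hf h1
    refine le_csSup ⟨Real.exp ‖S‖ * C, ?_⟩ ⟨f, hf, h1, (hrew f).symm⟩
    rintro r ⟨f, hf, h1, rfl⟩
    rw [hrew f]
    calc ∫ x, Real.exp (S x) * |f (α^[n] x)| ∂m
        ≤ ∫ x, Real.exp ‖S‖ * |f (α^[n] x)| ∂m := by
          refine integral_mono_ae (hint f hf h1) ((hC f hf h1).1.const_mul _) ?_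
          filter_upwards [hexpb] with x hx
          rw [Real.norm_of_nonneg (Real.exp_pos _).le] at hx
          exact mul_le_mul_of_nonneg_right hx (abs_nonneg _)
      _ = Real.exp ‖S‖ * ∫ x, |f (α^[n] x)| ∂m := integral_const_mul _ _
      _ ≤ _ := by
          have := (hC f hf h1).2
          gcongr
  set L := weightedOpNorm m α 1 (⇑φ) n with hLdef
  have hL0 : 0 ≤ L := by
    refine Real.sSup_nonneg ?_
    rintro r ⟨f, hf, h1, rfl⟩
    exact integral_nonneg fun x => by positivity
  obtain ⟨L', hL'pos, hLL', hlog⟩ : ∃ L' : ℝ, 0 < L' ∧ L ≤ L' ∧ Real.log L' = Real.log L := by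
    rcases hL0.eq_or_lt with h | h
    · exact ⟨1, one_pos, by rw [← h]; exact zero_le_one, by rw [← h]; simp⟩
    · exact ⟨L, h, le_rfl, rfl⟩
  have hμpos : ∀ i, 0 ≤ μ (D.g i) := fun i => hμ.1 _ (D.nonneg i)
  have hμ1 : ∑ i, μ (D.g i) = 1 := by
    have h1 : μ (∑ i, (1 : ℝ) • D.g i) = 1 := by
      refine hμ.2.1 _ ?_
      filter_upwards [aux_coeFn_sum m Finset.univ (fun _ => 1) D.g, D.sum_one] with x hx hx1
      rw [hx]
      simpa using hx1
    simpa using h1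
  have hμc : n * μ φ ≤ ∑ i, (c i + n * ε) * μ (D.g i) := by
    have h1 : 0 ≤ μ ((∑ i, (c i + n * ε) • D.g i) - S) := by
      refine hμ.1 _ ?_
      filter_upwards [aux_coeFn_sum m Finset.univ (fun i => c i + n * ε) D.g, hD1,
        Lp.coeFn_sub (∑ i, (c i + n * ε) • D.g i) S] with x hx hx1 hx2
      rw [hx2, Pi.sub_apply, hx, Pi.zero_apply]
      linarith
    rw [map_sub, hμS, map_sum] at h1
    simp only [map_smul, smul_eq_mul] at h1
    linarith
  have htau : tauN m α (⇑μ) n D ≤ ((Real.log L - n * μ φ + n * ε : ℝ) : EReal) := by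
    refine sSup_le ?_
    rintro r ⟨f, hf, h1, rfl⟩
    have hgi : ∀ i, Integrable (fun x => D.g i x * |f (α^[n] x)|) m := fun i =>
      (hC f hf h1).1.bdd_mul (Lp.aestronglyMeasurable (D.g i)) (aux_bound (D.g i))
    have hr0 : ∀ i, 0 ≤ ∫ x, D.g i x * |f (α^[n] x)| ∂m := fun i => by
      refine integral_nonneg_of_ae ?_
      filter_upwards [D.nonneg i] with x hx
      exact mul_nonneg hx (abs_nonneg _)
    have hsum : ∑ i, Real.exp (c i) * ∫ x, D.g i x * |f (α^[n] x)| ∂m ≤ L' := by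
      refine le_trans ?_ ((hle f hf h1).trans hLL')
      simp_rw [← integral_const_mul]
      rw [← integral_finsetSum _ fun i _ => (hgi i).const_mul _]
      refine integral_mono_ae (integrable_finsetSum _ fun i _ => (hgi i).const_mul _)
        (hint f hf h1) ?_
      filter_upwards [hD2] with x hx
      have := mul_le_mul_of_nonneg_right hx (abs_nonneg (f (α^[n] x)))
      rw [Finset.sum_mul] at this
      simpa only [mul_assoc] using this
    refine (Finset.sum_le_sum fun i _ =>
      aux_ent (μ (D.g i)) _ (c i) L' (hμpos i) (hr0 i) hL'pos).trans ?_
    rw [← aux_coe_sum, EReal.coe_le_coe_iff]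
    rw [Finset.sum_add_distrib, Finset.sum_sub_distrib, Finset.sum_sub_distrib,
      ← Finset.sum_div, ← Finset.sum_mul, hμ1, hlog]
    have h2 := (div_le_one hL'pos).2 hsum
    have h3 : ∑ i, (c i + n * ε) * μ (D.g i) = ∑ i, μ (D.g i) * c i + n * ε := by
      simp_rw [add_mul]
      rw [Finset.sum_add_distrib, ← Finset.mul_sum, hμ1, mul_one]
      simp_rw [mul_comm]
    linarith
  calc ((μ φ : ℝ) : EReal) + (((n : ℝ)⁻¹ : ℝ) : EReal) * tauN m α (⇑μ) n D
      ≤ ((μ φ : ℝ) : EReal) + (((n : ℝ)⁻¹ : ℝ) : EReal) *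
          ((Real.log L - n * μ φ + n * ε : ℝ) : EReal) := by
        gcongr
    _ = ((ε + Real.log L / (n : ℝ) : ℝ) : EReal) := by
        rw [← EReal.coe_mul, ← EReal.coe_add]
        congr 1
        field_simp
        ring

end
end

section
/- (Young inequality for spectral potential and t-entropy) For every φ ∈ L^∞(X, m) and every α-invariant measure μ ∈ M_α(X, m) one has λ(φ) ≥ μ[φ] + τ(μ). -/
open MeasureTheory Filter
open scoped ENNReal NNReal

noncomputable section

lemma yg_bound {X : Type*} [MeasurableSpace X] {m : Measure X} (f : Lp ℝ ⊤ m) :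
    ∃ B : ℕ, ∀ᵐ x ∂m, |f x| ≤ B := by
  obtain ⟨B, hB⟩ := exists_nat_ge (eLpNormEssSup f m).toReal
  refine ⟨B, ?_⟩
  have hfin : eLpNormEssSup f m ≠ ⊤ := by
    have := Lp.eLpNorm_ne_top f
    rwa [eLpNorm_exponent_top] at this
  filter_upwards [ae_le_eLpNormEssSup (f := f) (μ := m)] with x hx
  have := ENNReal.toReal_mono hfin hx
  rw [toReal_enorm, Real.norm_eq_abs] at this
  exact this.trans hB

lemma yg_map_le {X : Type*} [MeasurableSpace X] {m : Measure X} {α : X → X}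
    (hα : Measurable α) (hbdd : ShiftBounded m α) (n : ℕ) :
    ∃ C : ℝ≥0, m.map (α^[n]) ≤ (C : ℝ≥0∞) • m := by
  obtain ⟨C, -, hC⟩ := hbdd
  refine ⟨C ^ n, ?_⟩
  induction n with
  | zero => simp
  | succ n ih =>
    refine Measure.le_iff.2 fun s hs => ?_
    rw [Measure.map_apply (hα.iterate _) hs, Function.iterate_succ', Set.preimage_comp]
    have h1 := Measure.le_iff.1 ih _ (hα hs)
    rw [Measure.map_apply (hα.iterate _) (hα hs)] at h1
    refine h1.trans ?_
    simp only [Measure.smul_apply, smul_eq_mul]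
    calc _ ≤ ((C ^ n : ℝ≥0) : ℝ≥0∞) * (C * m s) := by gcongr; exact hC s hs
      _ = _ := by push_cast; ring

lemma yg_qmp {X : Type*} [MeasurableSpace X] {m : Measure X} {α : X → X}
    (hα : Measurable α) (hbdd : ShiftBounded m α) (n : ℕ) :
    Measure.QuasiMeasurePreserving (α^[n]) m m := by
  obtain ⟨C, hC⟩ := yg_map_le hα hbdd n
  exact ⟨hα.iterate n, (Measure.absolutelyContinuous_of_le hC).trans
    Measure.smul_absolutelyContinuous⟩

lemma yg_int {X : Type*} [MeasurableSpace X] {m : Measure X} {α : X → X}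
    (hα : Measurable α) (hbdd : ShiftBounded m α) (n : ℕ) {f : X → ℝ} (hf : Integrable f m) :
    Integrable (fun x => |f (α^[n] x)|) m := by
  obtain ⟨C, hC⟩ := yg_map_le hα hbdd n
  have h1 : Integrable f (m.map (α^[n])) :=
    (hf.smul_measure (c := (C : ℝ≥0∞)) ENNReal.coe_ne_top).mono_measure hC
  exact (h1.comp_measurable (hα.iterate n)).abs

lemma yg_int_le {X : Type*} [MeasurableSpace X] {m : Measure X} {α : X → X}
    (hα : Measurable α) (hbdd : ShiftBounded m α) (n : ℕ) :
    ∃ C : ℝ, ∀ f : X → ℝ, Integrable f m → ∫ x, |f (α^[n] x)| ∂m ≤ C * ∫ x, |f x| ∂m := by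
  obtain ⟨C, hC⟩ := yg_map_le hα hbdd n
  refine ⟨C, fun f hf => ?_⟩
  have h0 : Integrable f ((C : ℝ≥0∞) • m) := hf.smul_measure ENNReal.coe_ne_top
  have h1 : Integrable f (m.map (α^[n])) := h0.mono_measure hC
  have h2 : ∫ x, |f (α^[n] x)| ∂m = ∫ x, |f x| ∂(m.map (α^[n])) :=
    (integral_map (f := fun x => |f x|) (hα.iterate n).aemeasurable h1.abs.1).symm
  rw [h2]
  refine (integral_mono_measure hC (ae_of_all _ fun x => abs_nonneg _) h0.abs).trans ?_
  rw [integral_smul_measure]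
  simp

/-- The Birkhoff sums as elements of `L^∞`. -/
lemma yg_birk {X : Type*} [MeasurableSpace X] {m : Measure X} {α : X → X}
    (hα : Measurable α) (hbdd : ShiftBounded m α) (φ : Lp ℝ ⊤ m) (μ : Lp ℝ ⊤ m →L[ℝ] ℝ)
    (hμ : IsInvariantFunctional m α ⇑μ) (n : ℕ) :
    ∃ Ψ : Lp ℝ ⊤ m, ⇑Ψ =ᵐ[m] birkhoff α φ n ∧ μ Ψ = n * μ φ := by
  have hq : Measure.QuasiMeasurePreserving α m m := yg_qmp hα hbdd 1
  induction n with
  | zero =>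
    refine ⟨0, ?_, by simp⟩
    filter_upwards [Lp.coeFn_zero ℝ ⊤ m] with x hx
    rw [hx]; simp [birkhoff]
  | succ n ih =>
    obtain ⟨Ψ, h1, h2⟩ := ih
    obtain ⟨B, hB⟩ := yg_bound Ψ
    have hm : MemLp (fun x => Ψ (α x)) ⊤ m :=
      memLp_top_of_bound ((Lp.aestronglyMeasurable Ψ).comp_quasiMeasurePreserving hq) B
        (hq.ae hB)
    refine ⟨φ + hm.toLp _, ?_, ?_⟩
    · filter_upwards [Lp.coeFn_add φ (hm.toLp _), hm.coeFn_toLp, hq.ae h1] with x a b c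
      rw [a, Pi.add_apply, b, c]
      simp [birkhoff, Finset.sum_range_succ', add_comm]
    · rw [map_add, hμ Ψ _ hm.coeFn_toLp, h2]
      push_cast; ring

lemma yg_wint {X : Type*} [MeasurableSpace X] {m : Measure X}
    {ψ : X → ℝ} {Ψ : Lp ℝ ⊤ m} (h : ⇑Ψ =ᵐ[m] ψ) {g : X → ℝ} (hg : Integrable g m) :
    Integrable (fun x => Real.exp (ψ x) * g x) m := by
  obtain ⟨B, hB⟩ := yg_bound Ψ
  refine hg.bdd_mul (c := Real.exp B) ?_ ?_
  · exact Real.continuous_exp.comp_aestronglyMeasurable ((Lp.aestronglyMeasurable Ψ).congr h)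
  · filter_upwards [hB, h] with x a b
    rw [Real.norm_eq_abs, abs_of_pos (Real.exp_pos _), ← b]
    exact Real.exp_le_exp.2 (le_of_abs_le a)

/-- Elementary Gibbs inequality. -/
lemma yg_gibbs {ι : Type*} [Fintype ι] (a s : ι → ℝ) (N : ℝ) (hN : 0 < N)
    (ha : ∀ i, 0 ≤ a i) (ha1 : ∑ i, a i = 1) (hs : ∀ i, 0 ≤ s i)
    (has : ∀ i, a i ≠ 0 → s i ≠ 0) (hsN : ∑ i, s i ≤ N) :
    ∑ i, a i * Real.log (s i / a i) ≤ Real.log N := by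
  have key : ∀ i, a i * Real.log (s i / a i) ≤ a i * Real.log N + (s i / N - a i) := by
    intro i
    rcases eq_or_ne (a i) 0 with h | h
    · simp only [h, zero_mul, zero_add, sub_zero]; exact div_nonneg (hs i) hN.le
    · have hap : 0 < a i := lt_of_le_of_ne (ha i) h.symm
      have hsp : 0 < s i := lt_of_le_of_ne (hs i) (has i h).symm
      have h1 := Real.log_le_sub_one_of_pos (x := s i / a i / N) (by positivity)
      rw [Real.log_div (by positivity) (by positivity)] at h1
      have h2 := mul_le_mul_of_nonneg_left h1 hap.le
      have h3 : a i * (s i / a i / N - 1) = s i / N - a i := by field_simp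
      rw [h3] at h2
      linarith
  refine (Finset.sum_le_sum fun i _ => key i).trans ?_
  rw [Finset.sum_add_distrib, Finset.sum_sub_distrib, ← Finset.sum_mul, ← Finset.sum_div, ha1]
  have : (∑ i, s i) / N ≤ 1 := (div_le_one hN).2 hsN
  linarith

lemma yg_ent_bot {ι : Type*} [Fintype ι] (a r : ι → ℝ) (i : ι) (h : a i ≠ 0) (h' : r i = 0) :
    ∑ i, entTerm (a i) (r i) = ⊥ := by
  classical
  rw [← Finset.add_sum_erase _ _ (Finset.mem_univ i)]
  have : entTerm (a i) (r i) = ⊥ := by simp [entTerm, h, h']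
  rw [this, EReal.bot_add]

lemma yg_ent_coe {ι : Type*} [Fintype ι] (a r : ι → ℝ) (h : ∀ i, a i ≠ 0 → r i ≠ 0) :
    ∑ i, entTerm (a i) (r i) = ((∑ i, a i * Real.log (r i / a i) : ℝ) : EReal) := by
  have h1 : ∀ s : Finset ι, ∑ i ∈ s, entTerm (a i) (r i)
      = ((∑ i ∈ s, a i * Real.log (r i / a i) : ℝ) : EReal) := by
    classical
    intro s
    induction s using Finset.induction_on with
    | empty => simp
    | insert i s hi ih =>
      rw [Finset.sum_insert hi, Finset.sum_insert hi, ih, EReal.coe_add]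
      congr 1
      rcases eq_or_ne (a i) 0 with h0 | h0
      · simp [entTerm, h0]
      · simp [entTerm, h0, h i h0]
  exact h1 _

lemma yg_norm_set {X : Type*} [MeasurableSpace X] (m : Measure X) (α : X → X)
    (ψ : X → ℝ) (k : ℕ) :
  weightedOpNorm m α 1 ψ k = sSup {r : ℝ | ∃ f : X → ℝ, Integrable f m ∧ (∫ x, |f x| ∂m) = 1 ∧
    r = ∫ x, Real.exp (birkhoff α ψ k x) * |f (α^[k] x)| ∂m} := by
  simp only [weightedOpNorm, birkhoff, one_mul]

/-- Operator norm bound. -/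
lemma yg_le_norm {X : Type*} [MeasurableSpace X] {m : Measure X} {α : X → X}
    (hα : Measurable α) (hbdd : ShiftBounded m α) (ψ : X → ℝ) (n : ℕ) (Ψ : Lp ℝ ⊤ m)
    (hΨ : ⇑Ψ =ᵐ[m] birkhoff α ψ n) (f : X → ℝ) (hf : Integrable f m) :
    ∫ x, Real.exp (birkhoff α ψ n x) * |f (α^[n] x)| ∂m
      ≤ weightedOpNorm m α 1 ψ n * ∫ x, |f x| ∂m := by
  obtain ⟨C, hC⟩ := yg_int_le hα hbdd n
  obtain ⟨B, hB⟩ := yg_bound Ψ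
  have hb : ∀ f : X → ℝ, Integrable f m →
      ∫ x, Real.exp (birkhoff α ψ n x) * |f (α^[n] x)| ∂m
        ≤ Real.exp B * (C * ∫ x, |f x| ∂m) := by
    intro f hf
    refine le_trans ?_ (mul_le_mul_of_nonneg_left (hC f hf) (Real.exp_pos _).le)
    rw [← integral_const_mul]
    refine integral_mono_ae (yg_wint hΨ (yg_int hα hbdd n hf))
      ((yg_int hα hbdd n hf).const_mul _) ?_
    filter_upwards [hB, hΨ] with x a b
    refine mul_le_mul_of_nonneg_right ?_ (abs_nonneg _)
    rw [← b]
    exact Real.exp_le_exp.2 (le_of_abs_le a)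
  have hnn : 0 ≤ ∫ x, |f x| ∂m := integral_nonneg fun x => abs_nonneg _
  rcases hnn.eq_or_lt with h | h
  · have := hb f hf
    rw [← h] at this ⊢
    simpa using this
  · rw [← div_le_iff₀ h, yg_norm_set]
    refine le_csSup ⟨Real.exp B * (C * 1), ?_⟩
      ⟨fun x => (∫ x, |f x| ∂m)⁻¹ * f x, hf.const_mul _, ?_, ?_⟩
    · rintro r ⟨g, hg, hg1, rfl⟩
      rw [← hg1]; exact hb g hg
    · simp only [abs_mul, abs_inv, abs_of_pos h]
      rw [integral_const_mul, inv_mul_cancel₀ h.ne']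
    · simp only [abs_mul, abs_inv, abs_of_pos h]
      rw [div_eq_inv_mul, ← integral_const_mul]
      congr 1; ext x; ring

lemma yg_norm_nonneg {X : Type*} [MeasurableSpace X] (m : Measure X) (α : X → X)
    (ψ : X → ℝ) (k : ℕ) : 0 ≤ weightedOpNorm m α 1 ψ k := by
  rw [yg_norm_set]
  refine Real.sSup_nonneg ?_
  rintro r ⟨f, -, -, rfl⟩
  exact integral_nonneg fun x => mul_nonneg (Real.exp_pos _).le (abs_nonneg _)

lemma yg_submul {X : Type*} [MeasurableSpace X] {m : Measure X} {α : X → X}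
    (hα : Measurable α) (hbdd : ShiftBounded m α) (ψ : X → ℝ)
    (hΨ : ∀ n, ∃ Ψ : Lp ℝ ⊤ m, ⇑Ψ =ᵐ[m] birkhoff α ψ n) (p q : ℕ) :
    weightedOpNorm m α 1 ψ (p + q) ≤ weightedOpNorm m α 1 ψ p * weightedOpNorm m α 1 ψ q := by
  rw [yg_norm_set m α ψ (p + q)]
  refine Real.sSup_le ?_ (mul_nonneg (yg_norm_nonneg _ _ _ _) (yg_norm_nonneg _ _ _ _))
  rintro r ⟨f, hf, hf1, rfl⟩
  obtain ⟨P, hP⟩ := hΨ p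
  obtain ⟨Q, hQ⟩ := hΨ q
  have hi : Integrable (fun x => Real.exp (birkhoff α ψ q x) * |f (α^[q] x)|) m :=
    yg_wint hQ (yg_int hα hbdd q hf)
  have h1 := yg_le_norm hα hbdd ψ p P hP _ hi
  have h2 := yg_le_norm hα hbdd ψ q Q hQ f hf
  rw [hf1, mul_one] at h2
  have habs : ∀ y, |Real.exp (birkhoff α ψ q y) * (|f (α^[q] y)|)|
      = Real.exp (birkhoff α ψ q y) * |f (α^[q] y)| :=
    fun y => abs_of_nonneg (mul_nonneg (Real.exp_pos _).le (abs_nonneg _))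
  simp only [habs] at h1
  refine le_trans (le_of_eq ?_)
    (h1.trans (mul_le_mul_of_nonneg_left h2 (yg_norm_nonneg _ _ _ _)))
  congr 1; ext x
  have e1 : birkhoff α ψ (p + q) x = birkhoff α ψ p x + birkhoff α ψ q (α^[p] x) := by
    simp only [birkhoff, Finset.sum_range_add]
    congr 1
    refine Finset.sum_congr rfl fun i _ => ?_
    rw [← Function.iterate_add_apply, add_comm]
  rw [e1, Real.exp_add, add_comm p q, Function.iterate_add_apply, mul_assoc]

lemma yg_mono {X : Type*} [MeasurableSpace X] {m : Measure X} (μ : Lp ℝ ⊤ m →L[ℝ] ℝ)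
    (hμ : IsPositiveFunctional m ⇑μ) (f g : Lp ℝ ⊤ m) (h : ∀ᵐ x ∂m, f x ≤ g x) : μ f ≤ μ g := by
  have := hμ (g - f) (by
    filter_upwards [h, Lp.coeFn_sub g f] with x a b
    rw [b]; simpa using a)
  rw [map_sub] at this
  linarith

/-- The level-set partition. -/
lemma yg_part {X : Type*} [MeasurableSpace X] {m : Measure X} (Ψ : Lp ℝ ⊤ m) (B : ℕ)
    (hB : ∀ᵐ x ∂m, |Ψ x| ≤ B) :
    ∃ D : PartUnity m, (∀ i, ∀ᵐ x ∂m, (D.g i x = 0 ∨ D.g i x = 1)) ∧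
      ∀ i : Fin D.k, ∀ᵐ x ∂m, (D.g i x ≠ 0 → (i : ℝ) - B ≤ Ψ x ∧ Ψ x ≤ (i : ℝ) - B + 1) := by
  classical
  have hc : Measurable fun x => ⌊Ψ x + B⌋₊ :=
    Nat.measurable_floor.comp ((Lp.stronglyMeasurable Ψ).measurable.add_const _)
  have hmem : ∀ i : ℕ, MemLp (fun x => if ⌊Ψ x + B⌋₊ = i then (1 : ℝ) else 0) ⊤ m := by
    intro i
    refine memLp_top_of_bound (Measurable.ite (hc (measurableSet_singleton i))
      measurable_const measurable_const).aestronglyMeasurable 1 (ae_of_all _ fun x => ?_)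
    split_ifs <;> simp
  have hco := fun i => (hmem i).coeFn_toLp
  refine ⟨⟨2 * B + 1, fun i => (hmem i).toLp _, fun i => ?_, ?_⟩, fun i => ?_, fun i => ?_⟩
  · filter_upwards [hco i] with x hx
    rw [hx]; split_ifs <;> simp
  · have : ∀ᵐ x ∂m, ∀ i : Fin (2 * B + 1), ((hmem i).toLp _ : Lp ℝ ⊤ m) x
        = if ⌊Ψ x + B⌋₊ = i then (1 : ℝ) else 0 := ae_all_iff.2 fun i => hco i
    filter_upwards [this, hB] with x hx hb
    simp only [hx]
    have hlt : ⌊Ψ x + B⌋₊ < 2 * B + 1 := by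
      rw [Nat.floor_lt (by linarith [neg_le_of_abs_le hb])]
      push_cast
      linarith [le_of_abs_le hb]
    rw [Finset.sum_eq_single (⟨_, hlt⟩ : Fin (2 * B + 1))]
    · simp
    · intro j _ hj
      rw [if_neg]
      intro h
      exact hj (Fin.ext h.symm)
    · simp
  · filter_upwards [hco i] with x hx
    simp only [hx]; split_ifs <;> simp
  · filter_upwards [hco i, hB] with x hx hb
    simp only [hx]
    intro h
    have h' : ⌊Ψ x + B⌋₊ = i := by
      by_contra h2; exact h (if_neg h2)
    have h0 : 0 ≤ Ψ x + B := by linarith [neg_le_of_abs_le hb]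
    have := Nat.floor_le h0
    have := Nat.lt_floor_add_one (Ψ x + B)
    rw [h'] at *
    constructor <;> linarith

lemma yg_key {X : Type*} [MeasurableSpace X] {m : Measure X} {α : X → X}
    (hα : Measurable α) (hbdd : ShiftBounded m α)
    (φ : Lp ℝ ⊤ m) (μ : Lp ℝ ⊤ m →L[ℝ] ℝ) (hμ : MemMalpha m α ⇑μ) (n : ℕ) :
    ∃ D : PartUnity m,
      (weightedOpNorm m α 1 φ n = 0 → tauN m α μ n D = ⊥) ∧
      (weightedOpNorm m α 1 φ n ≠ 0 → tauN m α μ n D ≤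
        ((Real.log (weightedOpNorm m α 1 φ n) + 1 - n * μ φ : ℝ) : EReal)) := by
  obtain ⟨hpos, hone, hinv⟩ := hμ
  obtain ⟨Ψ, hΨ, hμΨ⟩ := yg_birk hα hbdd φ μ hinv n
  obtain ⟨B, hB⟩ := yg_bound Ψ
  obtain ⟨D, hD1, hD2⟩ := yg_part Ψ B hB
  set N := weightedOpNorm m α 1 φ n with hN
  have ha : ∀ i, 0 ≤ μ (D.g i) := fun i => hpos _ (D.nonneg i)
  have ha1 : ∑ i, μ (D.g i) = 1 := by
    rw [← map_sum]
    refine hone _ ?_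
    filter_upwards [Lp.coeFn_fun_finsetSum Finset.univ D.g, D.sum_one] with x h1 h2
    rw [h1]; exact h2
  -- mean of Ψ
  have hmean : μ Ψ ≤ ∑ i, μ (D.g i) * ((i : ℝ) - B + 1) := by
    have h1 : μ (∑ i : Fin D.k, ((i : ℝ) - B + 1) • D.g i)
        = ∑ i, μ (D.g i) * ((i : ℝ) - B + 1) := by
      rw [map_sum]
      refine Finset.sum_congr rfl fun i _ => ?_
      rw [map_smul, smul_eq_mul, mul_comm]
    rw [← h1]
    refine yg_mono μ hpos _ _ ?_
    filter_upwards [Lp.coeFn_fun_finsetSum Finset.univ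
        (fun i : Fin D.k => ((i : ℝ) - B + 1) • D.g i),
      ae_all_iff.2 fun i : Fin D.k => Lp.coeFn_smul ((i : ℝ) - B + 1) (D.g i),
      D.sum_one, ae_all_iff.2 hD1, ae_all_iff.2 hD2] with x h1 h2 h3 h4 h5
    rw [h1]
    calc Ψ x = ∑ i, Ψ x * D.g i x := by rw [← Finset.mul_sum, h3, mul_one]
      _ ≤ _ := by
        refine Finset.sum_le_sum fun i _ => ?_
        rw [h2 i, Pi.smul_apply, smul_eq_mul]
        rcases h4 i with h | h
        · simp [h]
        · rw [h, mul_one, mul_one]; exact (h5 i (by simp [h])).2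
  -- estimates for fixed f
  have hf_est : ∀ f : X → ℝ, Integrable f m → (∫ x, |f x| ∂m) = 1 →
      (∀ i, 0 ≤ ∫ x, D.g i x * |f (α^[n] x)| ∂m) ∧
      ∑ i : Fin D.k, Real.exp ((i : ℝ) - B) * ∫ x, D.g i x * |f (α^[n] x)| ∂m ≤ N := by
    intro f hf hf1
    have hi := yg_int hα hbdd n hf
    have hgi : ∀ i, Integrable (fun x => D.g i x * |f (α^[n] x)|) m := by
      intro i
      refine hi.bdd_mul (c := 1) (Lp.aestronglyMeasurable _) ?_
      filter_upwards [hD1 i] with x hx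
      rcases hx with h | h <;> simp [h]
    refine ⟨fun i => integral_nonneg_of_ae ?_, ?_⟩
    · filter_upwards [D.nonneg i] with x hx
      exact mul_nonneg hx (abs_nonneg _)
    · have h1 := yg_le_norm hα hbdd φ n Ψ hΨ f hf
      rw [hf1, mul_one] at h1
      refine le_trans ?_ h1
      simp only [← integral_const_mul]
      rw [← integral_finsetSum _ fun i _ => (hgi i).const_mul _]
      refine integral_mono_ae (integrable_finsetSum _ fun i _ => (hgi i).const_mul _)
        (yg_wint hΨ hi) ?_
      filter_upwards [D.sum_one, ae_all_iff.2 hD1, ae_all_iff.2 hD2, hΨ] with x h3 h4 h5 h6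
      calc _ ≤ ∑ i, D.g i x * (Real.exp (birkhoff α φ n x) * |f (α^[n] x)|) := by
            refine Finset.sum_le_sum fun i _ => ?_
            rcases h4 i with h | h
            · simp [h]
            · rw [h, one_mul, one_mul]
              refine mul_le_mul_of_nonneg_right (Real.exp_le_exp.2 ?_) (abs_nonneg _)
              rw [← h6]
              exact (h5 i (by simp [h])).1
        _ = _ := by rw [← Finset.sum_mul, h3, one_mul]
  refine ⟨D, fun hN0 => ?_, fun hN0 => ?_⟩
  · refine le_bot_iff.1 (sSup_le ?_)
    rintro r ⟨f, hf, hf1, rfl⟩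
    obtain ⟨h1, h2⟩ := hf_est f hf hf1
    obtain ⟨i, hi⟩ : ∃ i, μ (D.g i) ≠ 0 := by
      by_contra! h
      simp [h] at ha1
    rw [yg_ent_bot (fun i => μ (D.g i)) (fun i => ∫ x, D.g i x * |f (α^[n] x)| ∂m) i hi]
    rw [hN0] at h2
    have h3 := (Finset.sum_eq_zero_iff_of_nonneg fun i _ =>
      mul_nonneg (Real.exp_pos _).le (h1 i)).1 (le_antisymm h2 (Finset.sum_nonneg fun i _ =>
      mul_nonneg (Real.exp_pos _).le (h1 i))) i (Finset.mem_univ i)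
    exact (mul_eq_zero.1 h3).resolve_left (Real.exp_pos _).ne'
  · refine sSup_le ?_
    rintro r ⟨f, hf, hf1, rfl⟩
    obtain ⟨h1, h2⟩ := hf_est f hf hf1
    set R : Fin D.k → ℝ := fun i => ∫ x, D.g i x * |f (α^[n] x)| ∂m with hR
    by_cases hb : ∃ i, μ (D.g i) ≠ 0 ∧ R i = 0
    · obtain ⟨i, hi, hi'⟩ := hb
      have := yg_ent_bot (fun i => μ (D.g i)) R i hi hi'
      exact this.le.trans bot_le
    · push Not at hb
      have e := yg_ent_coe (fun i => μ (D.g i)) R hb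
      refine e.le.trans (EReal.coe_le_coe_iff.2 ?_)
      have hNpos : 0 < N := lt_of_le_of_ne (yg_norm_nonneg _ _ _ _) (Ne.symm hN0)
      have hg := yg_gibbs (fun i => μ (D.g i)) (fun i => Real.exp ((i : ℝ) - B) * R i) N hNpos ha
        ha1 (fun i => mul_nonneg (Real.exp_pos _).le (h1 i))
        (fun i hi => mul_ne_zero (Real.exp_pos _).ne' (hb i hi)) h2
      have hsplit : ∀ i : Fin D.k,
          μ (D.g i) * Real.log (Real.exp ((i : ℝ) - B) * R i / μ (D.g i))
          = μ (D.g i) * Real.log (R i / μ (D.g i)) + μ (D.g i) * ((i : ℝ) - B + 1)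
            - μ (D.g i) := by
        intro i
        rcases eq_or_ne (μ (D.g i)) 0 with h | h
        · simp [h]
        · rw [mul_div_assoc, Real.log_mul (Real.exp_pos _).ne' (div_ne_zero (hb i h) h),
            Real.log_exp]
          ring
      simp only [hsplit] at hg
      rw [Finset.sum_sub_distrib, Finset.sum_add_distrib, ha1] at hg
      linarith

/-- **Young inequality (11)**: `λ(φ) ≥ μ[φ] + τ(μ)` for every `φ ∈ L^∞(X, m)` and every
`μ ∈ M_α(X, m)`. -/
theorem young_inequality_spectralPotential_tEntropy
    {X : Type*} [MeasurableSpace X] (m : Measure X) (α : X → X)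
    (hα : Measurable α) (hbdd : ShiftBounded m α)
    (φ : Lp ℝ ⊤ m) (μ : Lp ℝ ⊤ m →L[ℝ] ℝ) (hμ : MemMalpha m α ⇑μ) :
    ((μ φ : ℝ) : EReal) + tEntropy m α (⇑μ) ≤
      ((spectralPotential m α (⇑φ) : ℝ) : EReal) := by
  have hb : ∀ n, ∃ Ψ : Lp ℝ ⊤ m, ⇑Ψ =ᵐ[m] birkhoff α φ n := fun n =>
    let ⟨Ψ, h, _⟩ := yg_birk hα hbdd φ μ hμ.2.2 n
    ⟨Ψ, h⟩
  have hle : ∀ n : ℕ, 0 < n → ∀ D, tEntropy m α μ ≤ (((n : ℝ)⁻¹ : ℝ) : EReal) * tauN m α μ n D :=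
    fun n hn D => iInf_le_of_le n (iInf_le_of_le hn (iInf_le _ D))
  rcases eq_or_ne (tEntropy m α μ) ⊥ with hbot | hbot
  · rw [hbot, EReal.add_bot]; exact bot_le
  set N : ℕ → ℝ := weightedOpNorm m α 1 φ with hNdef
  have hN0 : ∀ n, 0 < n → N n ≠ 0 := by
    intro n hn h0
    obtain ⟨D, h1, -⟩ := yg_key hα hbdd φ μ hμ n
    have := hle n hn D
    rw [h1 h0, EReal.coe_mul_bot_of_pos (by positivity)] at this
    exact hbot (le_bot_iff.1 this)
  have hτ : ∀ n : ℕ, 0 < n → tEntropy m α μ ≤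
      (((n : ℝ)⁻¹ * (Real.log (N n) + 1 - n * μ φ) : ℝ) : EReal) := by
    intro n hn
    obtain ⟨D, -, h1⟩ := yg_key hα hbdd φ μ hμ n
    refine (hle n hn D).trans ?_
    rw [EReal.coe_mul]
    exact mul_le_mul_of_nonneg_left (h1 (hN0 n hn)) (EReal.coe_nonneg.2 (by positivity))
  have htop : tEntropy m α μ ≠ ⊤ := by
    intro h
    have := hτ 1 one_pos
    rw [h] at this
    exact EReal.coe_ne_top _ (top_le_iff.1 this)
  lift tEntropy m α μ to ℝ using ⟨htop, hbot⟩ with t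
  have ht : ∀ n : ℕ, 0 < n → μ φ + t ≤ Real.log (N n) / n + 1 / n := by
    intro n hn
    have h1 := EReal.coe_le_coe_iff.1 (hτ n hn)
    have hn' : (0 : ℝ) < n := by exact_mod_cast hn
    have h2 : (n : ℝ)⁻¹ * (Real.log (N n) + 1 - n * μ φ)
      = Real.log (N n) / n + 1 / n - μ φ := by field_simp
    linarith
  have hsm : ∀ p q, N (p + q) ≤ N p * N q := yg_submul hα hbdd φ hb
  have hNpos : ∀ n, 0 < N n := by
    have hp : ∀ n, 0 < n → 0 < N n := fun n hn =>
      lt_of_le_of_ne (yg_norm_nonneg _ _ _ _) (hN0 n hn).symm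
    intro n
    rcases Nat.eq_zero_or_pos n with rfl | hn
    · have h1 := hsm 0 1
      have h2 := hp 1 one_pos
      rw [zero_add] at h1
      by_contra h
      nlinarith
    · exact hp n hn
  have hsub : Subadditive fun n => Real.log (N n) := by
    intro p q
    rw [← Real.log_mul (hNpos p).ne' (hNpos q).ne']
    exact Real.log_le_log (hNpos _) (hsm p q)
  have hbd : BddBelow (Set.range fun n : ℕ => Real.log (N n) / n) := by
    refine ⟨min 0 (μ φ + t - 1), ?_⟩
    rintro _ ⟨n, rfl⟩
    rcases Nat.eq_zero_or_pos n with rfl | hn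
    · simp
    · have h1 := ht n hn
      have h2 : (1 : ℝ) / n ≤ 1 := by
        rw [div_le_one (by exact_mod_cast hn)]; exact_mod_cast hn
      exact (min_le_right _ _).trans (by dsimp only; linarith)
  have hlim := hsub.tendsto_lim hbd
  have hsp : spectralPotential m α φ = hsub.lim := hlim.limUnder_eq
  rw [hsp, ← EReal.coe_add]
  refine EReal.coe_le_coe_iff.2 ?_
  have hlim2 := hlim.add (tendsto_one_div_atTop_nhds_zero_nat (𝕜 := ℝ))
  rw [add_zero] at hlim2
  exact ge_of_tendsto hlim2 ((eventually_gt_atTop 0).mono fun n hn => ht n hn)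

end
end

section
/- Fix μ ∈ M_α(X, m), a natural number n, and a measurable partition of unity D on X with τₙ(μ, D) > −∞. Suppose (f_k) is a sequence in L¹(X, m) with ‖f_k‖ = 1 such that Σ_{g ∈ D} μ[g]·ln( (∫_X g·|f_k ∘ αⁿ| dm)/μ[g] ) → τₙ(μ, D) and such that for each g ∈ D the limit C_g := lim_{k→∞} ∫_X g·|f_k ∘ αⁿ| dm exists. Then C_g > 0 whenever μ[g] > 0, and sup over f ∈ L¹(X, m) with ‖f‖ = 1 of Σ_{g ∈ D, μ[g] > 0} μ[g]·( ∫_X g·|f ∘ αⁿ| dm )/C_g equals 1. -/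
open MeasureTheory Filter
open scoped ENNReal NNReal

noncomputable section

lemma entTerm_ne_top (a r : ℝ) : entTerm a r ≠ ⊤ := by
  unfold entTerm
  split_ifs
  · exact EReal.zero_ne_top
  · exact bot_ne_top
  · exact EReal.coe_ne_top _

lemma sum_entTerm_ne_top {ι : Type*} (s : Finset ι) (a r : ι → ℝ) :
    ∑ i ∈ s, entTerm (a i) (r i) ≠ ⊤ := by
  classical
  induction s using Finset.induction_on with
  | empty => simp
  | insert i s hi ih =>
    rw [Finset.sum_insert hi]
    exact EReal.add_ne_top (entTerm_ne_top _ _) ih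

lemma entTerm_tendsto {a : ℝ} (ha : 0 ≤ a) {u : ℕ → ℝ} (hu : ∀ k, 0 ≤ u k) {c : ℝ}
    (h : Tendsto u atTop (nhds c)) :
    Tendsto (fun k => entTerm a (u k)) atTop (nhds (entTerm a c)) := by
  by_cases ha0 : a = 0
  · simp [entTerm, ha0]
  have hapos : 0 < a := lt_of_le_of_ne ha (Ne.symm ha0)
  by_cases hc : c = 0
  · subst hc
    have h0 : entTerm a 0 = ⊥ := by simp [entTerm, ha0]
    rw [h0, EReal.tendsto_nhds_bot_iff_real]
    intro x
    have hpos : 0 < a * Real.exp (x / a) := by positivity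
    filter_upwards [h.eventually (gt_mem_nhds hpos)] with k hk
    by_cases hk0 : u k = 0
    · simp [entTerm, ha0, hk0]
    have hkpos : 0 < u k := lt_of_le_of_ne (hu k) (Ne.symm hk0)
    simp only [entTerm, ha0, hk0, if_false]
    rw [EReal.coe_lt_coe_iff]
    have h1 : u k / a < Real.exp (x / a) := by
      rw [div_lt_iff₀ hapos]; linarith
    have h2 : Real.log (u k / a) < x / a :=
      (Real.log_lt_iff_lt_exp (div_pos hkpos hapos)).2 h1
    calc a * Real.log (u k / a) < a * (x / a) := by gcongr
      _ = x := by field_simp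
  · have h1 : Tendsto (fun k => ((a * Real.log (u k / a) : ℝ) : EReal)) atTop
        (nhds ((a * Real.log (c / a) : ℝ) : EReal)) := by
      rw [EReal.tendsto_coe]
      exact ((h.div_const a).log (div_ne_zero hc ha0)).const_mul a
    have h2 : entTerm a c = ((a * Real.log (c / a) : ℝ) : EReal) := by
      simp [entTerm, ha0, hc]
    rw [h2]
    refine h1.congr' ?_
    filter_upwards [h.eventually_ne hc] with k hk
    simp [entTerm, ha0, hk]

lemma sum_entTerm_tendsto {ι : Type*} (s : Finset ι) {a : ι → ℝ} (ha : ∀ i, 0 ≤ a i)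
    {u : ℕ → ι → ℝ} (hu : ∀ k i, 0 ≤ u k i) {c : ι → ℝ}
    (h : ∀ i, Tendsto (fun k => u k i) atTop (nhds (c i))) :
    Tendsto (fun k => ∑ i ∈ s, entTerm (a i) (u k i)) atTop
      (nhds (∑ i ∈ s, entTerm (a i) (c i))) := by
  classical
  induction s using Finset.induction_on with
  | empty => simp
  | insert i s hi ih =>
    simp only [Finset.sum_insert hi]
    have hc := EReal.continuousAt_add
      (p := (entTerm (a i) (c i), ∑ i ∈ s, entTerm (a i) (c i)))
      (Or.inl (entTerm_ne_top _ _)) (Or.inr (sum_entTerm_ne_top _ _ _))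
    exact Tendsto.comp hc ((entTerm_tendsto (ha i) (fun k => hu k i) (h i)).prodMk_nhds ih)

lemma sum_entTerm_eq {ι : Type*} (s : Finset ι) {a c : ι → ℝ}
    (hc : ∀ i ∈ s, a i ≠ 0 → c i ≠ 0) :
    ∑ i ∈ s, entTerm (a i) (c i) = ((∑ i ∈ s, a i * Real.log (c i / a i) : ℝ) : EReal) := by
  classical
  induction s using Finset.induction_on with
  | empty => simp
  | insert i s hi ih =>
    rw [Finset.sum_insert hi, Finset.sum_insert hi, EReal.coe_add,
      ih (fun j hj => hc j (Finset.mem_insert_of_mem hj))]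
    congr 1
    by_cases h0 : a i = 0
    · simp [entTerm, h0]
    · simp [entTerm, h0, hc i (Finset.mem_insert_self _ _) h0]

lemma entropy_core {ι : Type*} [Fintype ι] (a : ι → ℝ) (ha : ∀ i, 0 ≤ a i)
    (ha1 : ∑ i, a i = 1) (V : Set (ι → ℝ)) (hV0 : ∀ v ∈ V, ∀ i, 0 ≤ v i)
    (hconv : ∀ v ∈ V, ∀ w ∈ V, ∀ t : ℝ, 0 < t → t < 1 →
      (fun i => (1 - t) * v i + t * w i) ∈ V)
    (T : EReal) (hT : ∀ v ∈ V, ∑ i, entTerm (a i) (v i) ≤ T) (hTbot : ⊥ < T)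
    (v : ℕ → ι → ℝ) (hv : ∀ k, v k ∈ V) (C : ι → ℝ)
    (hmax : Tendsto (fun k => ∑ i, entTerm (a i) (v k i)) atTop (nhds T))
    (hC : ∀ i, Tendsto (fun k => v k i) atTop (nhds (C i))) :
    (∀ i, 0 < a i → 0 < C i) ∧
    sSup {r : ℝ | ∃ w ∈ V, r = ∑ i ∈ Finset.univ.filter (fun i => 0 < a i),
      a i * (w i / C i)} = 1 := by
  classical
  have hC0 : ∀ i, 0 ≤ C i := fun i => ge_of_tendsto' (hC i) (fun k => hV0 _ (hv k) i)
  have hTeq : T = ∑ i, entTerm (a i) (C i) :=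
    tendsto_nhds_unique hmax (sum_entTerm_tendsto _ ha (fun k => hV0 _ (hv k)) hC)
  have hCpos : ∀ i, 0 < a i → 0 < C i := by
    intro i hi
    refine lt_of_le_of_ne (hC0 i) (fun h0 => ?_)
    have hb : entTerm (a i) (C i) = ⊥ := by simp [entTerm, hi.ne', ← h0]
    rw [hTeq, ← Finset.add_sum_erase _ _ (Finset.mem_univ i), hb, EReal.bot_add] at hTbot
    exact lt_irrefl _ hTbot
  refine ⟨hCpos, ?_⟩
  have hTr : T = ((∑ i, a i * Real.log (C i / a i) : ℝ) : EReal) := by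
    rw [hTeq]
    exact sum_entTerm_eq _
      (fun i _ hi => (hCpos i (lt_of_le_of_ne (ha i) (Ne.symm hi))).ne')
  set S := Finset.univ.filter (fun i => 0 < a i) with hS
  have hSsum : ∀ φ : ι → ℝ, ∑ i, a i * φ i = ∑ i ∈ S, a i * φ i := by
    intro φ
    symm
    apply Finset.sum_subset (Finset.subset_univ _)
    intro i _ hi
    have : a i = 0 := by
      by_contra h
      exact hi (by simp [hS, lt_of_le_of_ne (ha i) (Ne.symm h)])
    simp [this]
  have hS1 : ∑ i ∈ S, a i = 1 := by
    have := hSsum (fun _ => 1)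
    simp only [mul_one] at this
    rw [← this, ha1]
  have memS : ∀ i, i ∈ S ↔ 0 < a i := by intro i; simp [hS]
  -- upper bound
  have hub : ∀ w ∈ V, ∑ i ∈ S, a i * (w i / C i) ≤ 1 := by
    intro w hw
    have key : ∀ t : ℝ, 0 < t → t < 1 →
        ∑ i ∈ S, a i * ((w i / C i - 1) / (1 + t * (w i / C i - 1))) ≤ 0 := by
      intro t ht0 ht1
      have hlim := sum_entTerm_tendsto Finset.univ ha
        (u := fun k i => (1 - t) * v k i + t * w i)
        (c := fun i => (1 - t) * C i + t * w i)
        (fun k => hV0 _ (hconv _ (hv k) _ hw t ht0 ht1))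
        (fun i => ((hC i).const_mul (1 - t)).add_const _)
      have hle := le_of_tendsto' hlim (fun k => hT _ (hconv _ (hv k) _ hw t ht0 ht1))
      have hpos : ∀ i, 0 < a i → 0 < (1 - t) * C i + t * w i := by
        intro i hi
        have h1 : 0 < (1 - t) * C i := mul_pos (by linarith) (hCpos i hi)
        have h2 : 0 ≤ t * w i := mul_nonneg ht0.le (hV0 w hw i)
        linarith
      rw [sum_entTerm_eq _
        (fun i _ hi => (hpos i (lt_of_le_of_ne (ha i) (Ne.symm hi))).ne'), hTr,
        EReal.coe_le_coe_iff, hSsum, hSsum] at hle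
      have hterm : ∀ i ∈ S, t * (a i * ((w i / C i - 1) / (1 + t * (w i / C i - 1)))) ≤
          a i * Real.log (((1 - t) * C i + t * w i) / a i)
            - a i * Real.log (C i / a i) := by
        intro i hi
        have hai := (memS i).1 hi
        have hCi := hCpos i hai
        have hp := hpos i hai
        rw [← mul_sub, ← Real.log_div (div_pos hp hai).ne' (div_pos hCi hai).ne']
        have e1 : ((1 - t) * C i + t * w i) / a i / (C i / a i)
            = 1 + t * (w i / C i - 1) := by
          field_simp
          ring
        have hy : 0 < 1 + t * (w i / C i - 1) := by
          rw [← e1]; exact div_pos (div_pos hp hai) (div_pos hCi hai)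
        rw [e1]
        have h3 := Real.one_sub_inv_le_log_of_pos hy
        have e2 : t * (a i * ((w i / C i - 1) / (1 + t * (w i / C i - 1))))
            = a i * (1 - (1 + t * (w i / C i - 1))⁻¹) := by
          generalize w i / C i - 1 = x at hy ⊢
          have := hy.ne'
          field_simp
          ring
        rw [e2]
        gcongr
      have h4 := Finset.sum_le_sum hterm
      rw [← Finset.mul_sum, Finset.sum_sub_distrib] at h4
      have h5 : t * ∑ i ∈ S, a i * ((w i / C i - 1) / (1 + t * (w i / C i - 1))) ≤ 0 := by
        linarith
      by_contra h6
      push Not at h6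
      exact absurd h5 (not_le.2 (mul_pos ht0 h6))
    have hlim : Tendsto
        (fun t : ℝ => ∑ i ∈ S, a i * ((w i / C i - 1) / (1 + t * (w i / C i - 1))))
        (nhdsWithin 0 (Set.Ioi 0)) (nhds (∑ i ∈ S, a i * (w i / C i - 1))) := by
      apply tendsto_finsetSum
      intro i _
      have hc : ContinuousAt
          (fun t : ℝ => a i * ((w i / C i - 1) / (1 + t * (w i / C i - 1)))) 0 := by
        apply ContinuousAt.mul continuousAt_const
        apply ContinuousAt.div continuousAt_const (by fun_prop) (by simp)
      have := hc.tendsto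
      simp only [zero_mul, add_zero, div_one] at this
      exact this.mono_left nhdsWithin_le_nhds
    have h0 : ∑ i ∈ S, a i * (w i / C i - 1) ≤ 0 := by
      refine le_of_tendsto hlim ?_
      filter_upwards [Ioo_mem_nhdsGT (show (0 : ℝ) < 1 by norm_num)] with t ht
      exact key t ht.1 ht.2
    simp only [mul_sub, mul_one, Finset.sum_sub_distrib, hS1] at h0
    linarith
  have hlub : IsLUB {r : ℝ | ∃ w ∈ V, r = ∑ i ∈ S, a i * (w i / C i)} 1 := by
    constructor
    · rintro r ⟨w, hw, rfl⟩
      exact hub w hw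
    · intro b hb
      have hl : Tendsto (fun k => ∑ i ∈ S, a i * (v k i / C i)) atTop (nhds 1) := by
        have : Tendsto (fun k => ∑ i ∈ S, a i * (v k i / C i)) atTop
            (nhds (∑ i ∈ S, a i * (C i / C i))) :=
          tendsto_finsetSum _ (fun i _ => ((hC i).div_const _).const_mul _)
        have e : ∑ i ∈ S, a i * (C i / C i) = 1 := by
          rw [← hS1]
          refine Finset.sum_congr rfl (fun i hi => ?_)
          rw [div_self (hCpos i ((memS i).1 hi)).ne', mul_one]
        rwa [e] at this
      exact le_of_tendsto' hl (fun k => hb ⟨v k, hv k, rfl⟩)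
  exact hlub.csSup_eq ⟨_, v 0, hv 0, rfl⟩

lemma shift_integrable {X : Type*} [MeasurableSpace X] {m : Measure X} {α : X → X}
    (hα : Measurable α) (hbdd : ShiftBounded m α) (n : ℕ) {f : X → ℝ}
    (hf : Integrable f m) : Integrable (fun x => f (α^[n] x)) m := by
  obtain ⟨c, _, hc⟩ := hbdd
  have hle : m.map α ≤ (c : ℝ≥0∞) • m := by
    refine Measure.le_iff.2 (fun s hs => ?_)
    rw [Measure.map_apply hα hs]
    simpa using hc s hs
  induction n generalizing f with
  | zero => simpa using hf
  | succ n ih =>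
    have h1 : Integrable (f ∘ α) m :=
      (hf.of_measure_le_smul ENNReal.coe_ne_top hle).comp_measurable hα
    have := ih h1
    simpa only [Function.comp, Function.iterate_succ_apply'] using this

/-- **Lemma 5**: if `τₙ(μ, D) > -∞` and `(f_k)` is a maximizing sequence for `τₙ(μ, D)`
such that the limits `C i = lim_k ∫ gᵢ·|f_k ∘ αⁿ| dm` exist, then `C i > 0` whenever
`μ[gᵢ] > 0`, and `sup_{‖f‖=1} Σ_{μ[gᵢ]>0} μ[gᵢ]·(∫ gᵢ·|f ∘ αⁿ| dm)/C i = 1`. -/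
theorem maximizing_sequence_sup_eq_one
    {X : Type*} [MeasurableSpace X] (m : Measure X) (α : X → X)
    (hα : Measurable α) (hbdd : ShiftBounded m α)
    (μ : Lp ℝ ⊤ m →L[ℝ] ℝ) (hμ : MemMalpha m α ⇑μ)
    (n : ℕ) (hn : 0 < n) (D : PartUnity m)
    (hfin : ⊥ < tauN m α (⇑μ) n D)
    (f : ℕ → X → ℝ) (hint : ∀ k, Integrable (f k) m)
    (hnorm : ∀ k, (∫ x, |f k x| ∂m) = 1)
    (C : Fin D.k → ℝ)
    (hmax : Tendsto
      (fun k => ∑ i, entTerm (μ (D.g i)) (∫ x, (D.g i : Lp ℝ ⊤ m) x * |f k (α^[n] x)| ∂m))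
      atTop (nhds (tauN m α (⇑μ) n D)))
    (hC : ∀ i, Tendsto (fun k => ∫ x, (D.g i : Lp ℝ ⊤ m) x * |f k (α^[n] x)| ∂m)
      atTop (nhds (C i))) :
    (∀ i, 0 < μ (D.g i) → 0 < C i) ∧
    sSup {r : ℝ | ∃ h : X → ℝ, Integrable h m ∧ (∫ x, |h x| ∂m) = 1 ∧
        r = ∑ i ∈ Finset.univ.filter (fun i => 0 < μ (D.g i)),
              μ (D.g i) * ((∫ x, (D.g i : Lp ℝ ⊤ m) x * |h (α^[n] x)| ∂m) / C i)} = 1 := by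
  have hI : ∀ (i : Fin D.k) (h : X → ℝ), Integrable h m →
      Integrable (fun x => (D.g i : Lp ℝ ⊤ m) x * |h (α^[n] x)|) m := fun i h hh =>
    Integrable.mul_of_top_right (shift_integrable hα hbdd n hh).abs (Lp.memLp (D.g i))
  have ha1 : ∑ i, μ (D.g i) = 1 := by
    rw [← map_sum]
    apply hμ.2.1
    filter_upwards [Lp.coeFn_fun_finsetSum Finset.univ D.g, D.sum_one] with x h1 h2
    rw [h1, h2]
  have core := entropy_core (fun i => μ (D.g i)) (fun i => hμ.1 _ (D.nonneg i)) ha1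
    {v | ∃ h : X → ℝ, Integrable h m ∧ (∫ x, |h x| ∂m) = 1 ∧
      v = fun i => ∫ x, (D.g i : Lp ℝ ⊤ m) x * |h (α^[n] x)| ∂m}
    (by
      rintro v ⟨h, hh, h1, rfl⟩ i
      apply integral_nonneg_of_ae
      filter_upwards [D.nonneg i] with x hx
      exact mul_nonneg hx (abs_nonneg _))
    (by
      rintro v ⟨h, hh, h1, rfl⟩ w ⟨h', hh', h1', rfl⟩ t ht0 ht1
      have habs : ∀ x, abs ((1 - t) * |h x| + t * |h' x|) = (1 - t) * |h x| + t * |h' x| := by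
        intro x
        apply abs_of_nonneg
        have : 0 ≤ 1 - t := by linarith
        positivity
      refine ⟨fun x => (1 - t) * |h x| + t * |h' x|,
        (hh.abs.const_mul _).add (hh'.abs.const_mul _), ?_, ?_⟩
      · simp only [habs]
        rw [integral_add (hh.abs.const_mul _) (hh'.abs.const_mul _),
          integral_const_mul, integral_const_mul, h1, h1']
        ring
      · funext i
        simp only [habs]
        rw [← integral_const_mul, ← integral_const_mul,
          ← integral_add ((hI i h hh).const_mul _) ((hI i h' hh').const_mul _)]
        congr 1
        funext x
        ring)
    (tauN m α (⇑μ) n D)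
    (by
      rintro v ⟨h, hh, h1, rfl⟩
      exact le_sSup ⟨h, hh, h1, rfl⟩)
    hfin
    (fun k i => ∫ x, (D.g i : Lp ℝ ⊤ m) x * |f k (α^[n] x)| ∂m)
    (fun k => ⟨f k, hint k, hnorm k, rfl⟩) C hmax hC
  refine ⟨core.1, ?_⟩
  refine Eq.trans ?_ core.2
  congr 1
  ext r
  constructor
  · rintro ⟨h, hh, h1, rfl⟩
    exact ⟨_, ⟨h, hh, h1, rfl⟩, rfl⟩
  · rintro ⟨_, ⟨h, hh, h1, rfl⟩, rfl⟩
    exact ⟨h, hh, h1, rfl⟩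

end
end

section
/- (Convexity of the spectral potential) For all φ, ψ ∈ L^∞(X, m) and every t ∈ [0, 1], one has λ((1 − t)φ + tψ) ≤ (1 − t)λ(φ) + tλ(ψ). -/
open MeasureTheory Filter
open scoped ENNReal NNReal

noncomputable section

/-- measurable and a.e. bounded by `M` -/
def BddW {X : Type*} [MeasurableSpace X] (m : Measure X) (φ : X → ℝ) (M : ℝ) : Prop :=
  Measurable φ ∧ ∀ᵐ x ∂m, |φ x| ≤ M

section helpers
variable {X : Type*} [MeasurableSpace X] {m : Measure X} {α : X → X}

theorem ShiftBounded.map_le (hα : Measurable α) (h : ShiftBounded m α) :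
    ∃ C : ℝ≥0, Measure.map α m ≤ C • m := by
  obtain ⟨C, -, h⟩ := h
  refine ⟨C, Measure.le_iff.2 fun s hs => ?_⟩
  rw [Measure.map_apply hα hs]
  exact h s hs

theorem ShiftBounded.iterate (hα : Measurable α) (h : ShiftBounded m α) (k : ℕ) :
    ShiftBounded m (α^[k]) := by
  induction k with
  | zero => exact ⟨1, one_pos, fun G _ => by simp⟩
  | succ k ih =>
    obtain ⟨C, hC, h⟩ := h
    obtain ⟨D, hD, ih⟩ := ih
    refine ⟨C * D, mul_pos hC hD, fun G hG => ?_⟩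
    rw [Function.iterate_succ, Set.preimage_comp]
    refine (h _ ((hα.iterate k) hG)).trans ?_
    rw [ENNReal.coe_mul, mul_assoc]
    gcongr
    exact ih G hG

theorem ShiftBounded.qmp (hα : Measurable α) (h : ShiftBounded m α) :
    Measure.QuasiMeasurePreserving α m m := by
  obtain ⟨C, hC⟩ := h.map_le hα
  exact ⟨hα, hC.absolutelyContinuous.trans Measure.smul_absolutelyContinuous⟩

theorem ShiftBounded.integrable (hα : Measurable α) (h : ShiftBounded m α) {f : X → ℝ}
    (hf : Integrable f m) : Integrable (fun x => f (α x)) m := by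
  obtain ⟨C, hC⟩ := h.map_le hα
  have h1 : Integrable f (C • m) := hf.smul_measure_nnreal
  exact (h1.mono_measure hC).comp_measurable hα

theorem ShiftBounded.integral_le (hα : Measurable α) (h : ShiftBounded m α) :
    ∃ C : ℝ≥0, ∀ f : X → ℝ, Integrable f m → ∫ x, |f (α x)| ∂m ≤ C * ∫ x, |f x| ∂m := by
  obtain ⟨C, hC⟩ := h.map_le hα
  refine ⟨C, fun f hf => ?_⟩
  have h1 : Integrable f (C • m) := hf.smul_measure_nnreal
  have h2 := h1.mono_measure hC
  have h3 : ∫ x, |f (α x)| ∂m = ∫ y, |f y| ∂(Measure.map α m) :=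
    (integral_map hα.aemeasurable h2.abs.aestronglyMeasurable).symm
  rw [h3]
  refine (integral_mono_measure hC (Eventually.of_forall fun x => abs_nonneg _) h1.abs).trans ?_
  rw [integral_smul_nnreal_measure]
  rfl

theorem BddW.birk_meas (hα : Measurable α) {φ : X → ℝ} {M : ℝ} (h : BddW m φ M) (k : ℕ) :
    Measurable (birkhoff α φ k) := by
  unfold birkhoff
  exact Finset.measurable_sum _ fun i _ => h.1.comp (hα.iterate i)

theorem BddW.birk_bdd (hα : Measurable α) (hb : ShiftBounded m α) {φ : X → ℝ} {M : ℝ}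
    (h : BddW m φ M) (k : ℕ) : ∀ᵐ x ∂m, |birkhoff α φ k x| ≤ k * M := by
  have : ∀ i : ℕ, ∀ᵐ x ∂m, |φ (α^[i] x)| ≤ M := fun i =>
    ((hb.iterate hα i).qmp (hα.iterate i)).ae h.2
  filter_upwards [ae_all_iff.2 this] with x hx
  unfold birkhoff
  refine (Finset.abs_sum_le_sum_abs _ _).trans ?_
  refine (Finset.sum_le_sum fun i _ => hx i).trans ?_
  simp

theorem BddW.integrable (hα : Measurable α) (hb : ShiftBounded m α) {φ : X → ℝ} {M : ℝ}
    (h : BddW m φ M) (k : ℕ) {f : X → ℝ} (hf : Integrable f m) :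
    Integrable (fun x => Real.exp (birkhoff α φ k x) * |f (α^[k] x)|) m := by
  have h1 := (hb.iterate hα k).integrable (hα.iterate k) hf.abs
  refine Integrable.bdd_mul (c := Real.exp (k * M)) h1
    (h.birk_meas hα k).exp.aestronglyMeasurable ?_
  filter_upwards [h.birk_bdd hα hb k] with x hx
  rw [Real.norm_eq_abs, Real.abs_exp]
  exact Real.exp_le_exp.2 (le_of_abs_le hx)

/-- value set -/
def vals (m : Measure X) (α : X → X) (φ : X → ℝ) (k : ℕ) : Set ℝ :=
  {r : ℝ | ∃ f : X → ℝ, Integrable f m ∧ (∫ x, |f x| ∂m) = 1 ∧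
    r = ∫ x, Real.exp (birkhoff α φ k x) * |f (α^[k] x)| ∂m}

theorem weightedOpNorm_eq (φ : X → ℝ) (k : ℕ) :
    weightedOpNorm m α 1 φ k = sSup (vals m α φ k) := by
  simp only [weightedOpNorm, vals, birkhoff, one_mul]

theorem opNorm_nonneg (φ : X → ℝ) (k : ℕ) : 0 ≤ weightedOpNorm m α 1 φ k := by
  rw [weightedOpNorm_eq]
  apply Real.sSup_nonneg
  rintro r ⟨f, -, -, rfl⟩
  exact integral_nonneg fun x => by positivity

theorem BddW.bddAbove (hα : Measurable α) (hb : ShiftBounded m α) {φ : X → ℝ} {M : ℝ}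
    (h : BddW m φ M) (k : ℕ) : BddAbove (vals m α φ k) := by
  obtain ⟨C, hC⟩ := (hb.iterate hα k).integral_le (hα.iterate k)
  refine ⟨Real.exp (k * M) * C, ?_⟩
  rintro r ⟨f, hf, hf1, rfl⟩
  have h1 := (hb.iterate hα k).integrable (hα.iterate k) hf.abs
  have : ∫ x, Real.exp (birkhoff α φ k x) * |f (α^[k] x)| ∂m
      ≤ ∫ x, Real.exp (k * M) * |f (α^[k] x)| ∂m := by
    refine integral_mono_ae (h.integrable hα hb k hf) (h1.const_mul _) ?_
    filter_upwards [h.birk_bdd hα hb k] with x hx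
    exact mul_le_mul_of_nonneg_right (Real.exp_le_exp.2 (le_of_abs_le hx)) (abs_nonneg _)
  refine this.trans ?_
  rw [integral_const_mul]
  have := hC f hf
  rw [hf1, mul_one] at this
  gcongr

theorem BddW.le_opNorm (hα : Measurable α) (hb : ShiftBounded m α) {φ : X → ℝ} {M : ℝ}
    (h : BddW m φ M) (k : ℕ) {f : X → ℝ} (hf : Integrable f m) :
    ∫ x, Real.exp (birkhoff α φ k x) * |f (α^[k] x)| ∂m
      ≤ weightedOpNorm m α 1 φ k * ∫ x, |f x| ∂m := by
  have hI : 0 ≤ ∫ x, |f x| ∂m := integral_nonneg fun x => abs_nonneg _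
  rcases hI.eq_or_lt with h0 | h0
  · rw [← h0, mul_zero]
    have h2 := (integral_eq_zero_iff_of_nonneg (fun x => abs_nonneg (f x)) hf.abs).1 h0.symm
    have h3 := ((hb.iterate hα k).qmp (hα.iterate k)).ae h2
    refine le_of_eq (integral_eq_zero_of_ae ?_)
    filter_upwards [h3] with x hx
    simp only [Pi.zero_apply] at hx ⊢
    rw [hx, mul_zero]
  · rw [weightedOpNorm_eq, ← div_le_iff₀ h0]
    apply le_csSup (h.bddAbove hα hb k)
    refine ⟨fun x => (∫ x, |f x| ∂m)⁻¹ * f x, hf.const_mul _, ?_, ?_⟩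
    · simp only [abs_mul, abs_of_pos (inv_pos.2 h0)]
      rw [integral_const_mul, inv_mul_cancel₀ h0.ne']
    · simp only [abs_mul, abs_of_pos (inv_pos.2 h0), mul_left_comm _ ((∫ x, |f x| ∂m)⁻¹)]
      rw [integral_const_mul, div_eq_inv_mul]

theorem BddW.opNorm_add (hα : Measurable α) (hb : ShiftBounded m α) {φ : X → ℝ} {M : ℝ}
    (h : BddW m φ M) (k l : ℕ) : weightedOpNorm m α 1 φ (k + l)
      ≤ weightedOpNorm m α 1 φ k * weightedOpNorm m α 1 φ l := by
  rw [weightedOpNorm_eq φ (k + l)]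
  apply Real.sSup_le _ (mul_nonneg (opNorm_nonneg _ _) (opNorm_nonneg _ _))
  rintro r ⟨f, hf, hf1, rfl⟩
  have h1 := h.le_opNorm hα hb k (h.integrable hα hb l hf)
  have h2 := h.le_opNorm hα hb l hf
  rw [hf1, mul_one] at h2
  have e1 : ∀ x, |Real.exp (birkhoff α φ l x) * (|f (α^[l] x)|)|
    = Real.exp (birkhoff α φ l x) * |f (α^[l] x)| := fun x => abs_of_nonneg (by positivity)
  simp only [e1] at h1
  have e2 : ∀ x, Real.exp (birkhoff α φ (k + l) x) * |f (α^[k + l] x)| =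
      Real.exp (birkhoff α φ k x) *
        (Real.exp (birkhoff α φ l (α^[k] x)) * |f (α^[l] (α^[k] x))|) := by
    intro x
    rw [← mul_assoc, ← Real.exp_add, ← Function.iterate_add_apply, add_comm l k]
    congr 2
    unfold birkhoff
    rw [Finset.sum_range_add]
    simp only [← Function.iterate_add_apply, add_comm]
  simp only [e2]
  exact h1.trans (mul_le_mul_of_nonneg_left h2 (opNorm_nonneg _ _))

theorem BddW.opNorm_compare (hα : Measurable α) (hb : ShiftBounded m α) {φ ψ : X → ℝ} {M N : ℝ}
    (h : BddW m φ M) (h' : BddW m ψ N) (k : ℕ) : weightedOpNorm m α 1 φ k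
      ≤ Real.exp (k * (M + N)) * weightedOpNorm m α 1 ψ k := by
  rw [weightedOpNorm_eq φ k]
  apply Real.sSup_le _ (mul_nonneg (Real.exp_nonneg _) (opNorm_nonneg _ _))
  rintro r ⟨f, hf, hf1, rfl⟩
  have h2 := h'.le_opNorm hα hb k hf
  rw [hf1, mul_one] at h2
  refine le_trans ?_ (mul_le_mul_of_nonneg_left h2 (Real.exp_nonneg _))
  rw [← integral_const_mul]
  refine integral_mono_ae (h.integrable hα hb k hf) ((h'.integrable hα hb k hf).const_mul _) ?_
  filter_upwards [h.birk_bdd hα hb k, h'.birk_bdd hα hb k] with x hx hx'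
  show _ ≤ Real.exp (k * (M + N)) * (Real.exp _ * _)
  rw [← mul_assoc, ← Real.exp_add]
  refine mul_le_mul_of_nonneg_right (Real.exp_le_exp.2 ?_) (abs_nonneg _)
  have := abs_le.1 hx
  have := abs_le.1 hx'
  linarith

theorem BddW.opNorm_convex (hα : Measurable α) (hb : ShiftBounded m α) {φ ψ : X → ℝ} {M N : ℝ}
    (h : BddW m φ M) (h' : BddW m ψ N) {t : ℝ} (ht0 : 0 ≤ t) (ht1 : t ≤ 1) (k : ℕ)
    {P : ℝ} (hh : BddW m (fun x => (1 - t) * φ x + t * ψ x) P)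
    (hA : 0 < weightedOpNorm m α 1 φ k) (hB : 0 < weightedOpNorm m α 1 ψ k) :
    weightedOpNorm m α 1 (fun x => (1 - t) * φ x + t * ψ x) k
      ≤ Real.exp ((1 - t) * Real.log (weightedOpNorm m α 1 φ k)
        + t * Real.log (weightedOpNorm m α 1 ψ k)) := by
  rw [weightedOpNorm_eq _ k]
  apply Real.sSup_le _ (Real.exp_nonneg _)
  rintro r ⟨f, hf, hf1, rfl⟩
  have h1 := h.le_opNorm hα hb k hf
  have h2 := h'.le_opNorm hα hb k hf
  rw [hf1, mul_one] at h1 h2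
  set A := weightedOpNorm m α 1 φ k
  set B := weightedOpNorm m α 1 ψ k
  set E := Real.exp ((1 - t) * Real.log A + t * Real.log B) with hE
  have i1 := h.integrable hα hb k hf
  have i2 := h'.integrable hα hb k hf
  have key : ∀ x, Real.exp (birkhoff α (fun x => (1 - t) * φ x + t * ψ x) k x) * |f (α^[k] x)| ≤
      E * ((1 - t) * A⁻¹) * (Real.exp (birkhoff α φ k x) * |f (α^[k] x)|)
      + E * (t * B⁻¹) * (Real.exp (birkhoff α ψ k x) * |f (α^[k] x)|) := by
    intro x
    have e : birkhoff α (fun x => (1 - t) * φ x + t * ψ x) k x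
        = (1 - t) * birkhoff α φ k x + t * birkhoff α ψ k x := by
      simp only [birkhoff, Finset.sum_add_distrib, Finset.mul_sum]
    have c := convexOn_exp.2 (Set.mem_univ (birkhoff α φ k x - Real.log A))
      (Set.mem_univ (birkhoff α ψ k x - Real.log B)) (sub_nonneg.2 ht1) ht0 (by ring)
    simp only [smul_eq_mul, Real.exp_sub, Real.exp_log hA, Real.exp_log hB] at c
    have e3 : Real.exp (birkhoff α (fun x => (1 - t) * φ x + t * ψ x) k x) =
        E * Real.exp ((1 - t) * (birkhoff α φ k x - Real.log A)
          + t * (birkhoff α ψ k x - Real.log B)) := by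
      rw [hE, ← Real.exp_add, e]
      congr 1
      ring
    rw [e3]
    have := mul_le_mul_of_nonneg_right (mul_le_mul_of_nonneg_left c (Real.exp_nonneg _ : 0 ≤ E))
      (abs_nonneg (f (α^[k] x)))
    refine this.trans (le_of_eq ?_)
    simp only [div_eq_mul_inv]
    ring
  refine (integral_mono (hh.integrable hα hb k hf) ((i1.const_mul _).add (i2.const_mul _))
    key).trans ?_
  have e4 := integral_add (i1.const_mul (E * ((1 - t) * A⁻¹))) (i2.const_mul (E * (t * B⁻¹)))
  refine (le_of_eq e4).trans ?_
  rw [integral_const_mul, integral_const_mul]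
  have hE0 : 0 ≤ E := Real.exp_nonneg _
  have ht1' := sub_nonneg.2 ht1
  calc _ ≤ E * ((1 - t) * A⁻¹) * A + E * (t * B⁻¹) * B := by gcongr
    _ = E := by field_simp; ring

/-- the sequence whose limit is the spectral potential -/
def useq (m : Measure X) (α : X → X) (φ : X → ℝ) (k : ℕ) : ℝ :=
  Real.log (weightedOpNorm m α 1 φ k) / (k : ℝ)

theorem spectralPotential_eq (φ : X → ℝ) :
    spectralPotential m α φ = limUnder atTop (useq m α φ) := rfl

theorem BddW.lim_zero (hα : Measurable α) (hb : ShiftBounded m α) {φ : X → ℝ} {M : ℝ}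
    (h : BddW m φ M) {k : ℕ} (hk : weightedOpNorm m α 1 φ k = 0) :
    spectralPotential m α φ = 0 := by
  rw [spectralPotential_eq]
  apply Tendsto.limUnder_eq
  refine tendsto_const_nhds.congr' ?_
  filter_upwards [eventually_ge_atTop k] with n hn
  obtain ⟨l, rfl⟩ := Nat.exists_eq_add_of_le hn
  have h1 := h.opNorm_add hα hb k l
  rw [hk, zero_mul] at h1
  simp [useq, le_antisymm h1 (opNorm_nonneg _ _)]

theorem BddW.useq_tendsto (hα : Measurable α) (hb : ShiftBounded m α) {φ : X → ℝ} {M : ℝ}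
    (h : BddW m φ M) (hp : ∀ k, 0 < weightedOpNorm m α 1 φ k)
    (hbd : BddBelow (Set.range (useq m α φ))) :
    Tendsto (useq m α φ) atTop (nhds (spectralPotential m α φ)) := by
  rw [spectralPotential_eq]
  have hs : Subadditive (fun k => Real.log (weightedOpNorm m α 1 φ k)) := by
    intro k l
    rw [← Real.log_mul (hp k).ne' (hp l).ne']
    exact Real.log_le_log (hp _) (h.opNorm_add hα hb k l)
  exact tendsto_nhds_limUnder ⟨_, hs.tendsto_lim hbd⟩

theorem BddW.useq_compare (hα : Measurable α) (hb : ShiftBounded m α) {φ ψ : X → ℝ} {M N : ℝ}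
    (h : BddW m φ M) (h' : BddW m ψ N) (hp : ∀ k, 0 < weightedOpNorm m α 1 φ k)
    (hp' : ∀ k, 0 < weightedOpNorm m α 1 ψ k)
    (hbd : BddBelow (Set.range (useq m α φ))) : BddBelow (Set.range (useq m α ψ)) := by
  obtain ⟨c, hc⟩ := hbd
  refine ⟨min 0 (c - (M + N)), ?_⟩
  rintro _ ⟨k, rfl⟩
  rcases Nat.eq_zero_or_pos k with rfl | hk
  · simp [useq]
  have hk' : (0 : ℝ) < k := Nat.cast_pos.2 hk
  refine (min_le_right _ _).trans ?_
  have h1 := hc ⟨k, rfl⟩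
  have h2 := Real.log_le_log (hp k) (h.opNorm_compare hα hb h' k)
  rw [Real.log_mul (Real.exp_ne_zero _) (hp' k).ne', Real.log_exp] at h2
  unfold useq at h1 ⊢
  rw [le_div_iff₀ hk'] at h1 ⊢
  linarith

theorem limUnder_junk {u : ℕ → ℝ} (hbd : ¬ BddBelow (Set.range u)) :
    limUnder atTop u = Classical.epsilon (fun _ : ℝ => False) := by
  unfold limUnder lim
  congr 1
  funext x
  simp only [eq_iff_iff, iff_false]
  intro hx
  exact hbd (Tendsto.bddBelow_range hx)

theorem bddW_Lp (φ : Lp ℝ ⊤ m) : ∃ M, BddW m (⇑φ) M := by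
  refine ⟨‖φ‖, (Lp.stronglyMeasurable φ).measurable, ?_⟩
  filter_upwards [ae_le_eLpNormEssSup (f := ⇑φ) (μ := m)] with x hx
  rw [Lp.norm_def, eLpNorm_exponent_top, ← Real.norm_eq_abs, ← toReal_enorm]
  refine ENNReal.toReal_mono ?_ hx
  rw [← eLpNorm_exponent_top]
  exact (Lp.eLpNorm_ne_top φ)

end helpers

/-- **Lemma 6 d)** (convexity): `λ((1−t)φ + tψ) ≤ (1−t)λ(φ) + tλ(ψ)` for `t ∈ [0, 1]`. -/
theorem spectralPotential_convex
    {X : Type*} [MeasurableSpace X] (m : Measure X) (α : X → X)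
    (hα : Measurable α) (hbdd : ShiftBounded m α)
    (φ ψ : Lp ℝ ⊤ m) (t : ℝ) (ht0 : 0 ≤ t) (ht1 : t ≤ 1) :
    spectralPotential m α (fun x => (1 - t) * φ x + t * ψ x) ≤
      (1 - t) * spectralPotential m α (⇑φ) + t * spectralPotential m α (⇑ψ) := by
  obtain ⟨M, h⟩ := bddW_Lp φ
  obtain ⟨N, h'⟩ := bddW_Lp ψ
  have ht1' := sub_nonneg.2 ht1
  have hh : BddW m (fun x => (1 - t) * φ x + t * ψ x) ((1 - t) * M + t * N) := by
    refine ⟨(h.1.const_mul _).add (h'.1.const_mul _), ?_⟩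
    filter_upwards [h.2, h'.2] with x hx hx'
    refine (abs_add_le _ _).trans ?_
    rw [abs_mul, abs_mul, abs_of_nonneg ht1', abs_of_nonneg ht0]
    gcongr
  have zero : ∀ {f g : X → ℝ} {P Q : ℝ}, BddW m f P → BddW m g Q → ∀ k,
      weightedOpNorm m α 1 f k = 0 → weightedOpNorm m α 1 g k = 0 := by
    intro f g P Q hf hg k h0
    have := hg.opNorm_compare hα hbdd hf k
    rw [h0, mul_zero] at this
    exact le_antisymm this (opNorm_nonneg _ _)
  by_cases hz : ∃ k, weightedOpNorm m α 1 (⇑φ) k = 0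
  · obtain ⟨k, hk⟩ := hz
    rw [h.lim_zero hα hbdd hk, h'.lim_zero hα hbdd (zero h h' k hk),
      hh.lim_zero hα hbdd (zero h hh k hk)]
    simp
  push Not at hz
  have p1 : ∀ k, 0 < weightedOpNorm m α 1 (⇑φ) k := fun k =>
    (opNorm_nonneg _ _).lt_of_ne' (hz k)
  have p2 : ∀ k, 0 < weightedOpNorm m α 1 (⇑ψ) k := fun k =>
    (opNorm_nonneg _ _).lt_of_ne' fun h0 => hz k (zero h' h k h0)
  have p3 : ∀ k, 0 < weightedOpNorm m α 1 (fun x => (1 - t) * φ x + t * ψ x) k := fun k =>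
    (opNorm_nonneg _ _).lt_of_ne' fun h0 => hz k (zero hh h k h0)
  by_cases hbd : BddBelow (Set.range (useq m α (⇑φ)))
  · have l1 := h.useq_tendsto hα hbdd p1 hbd
    have l2 := h'.useq_tendsto hα hbdd p2 (h.useq_compare hα hbdd h' p1 p2 hbd)
    have l3 := hh.useq_tendsto hα hbdd p3 (h.useq_compare hα hbdd hh p1 p3 hbd)
    refine le_of_tendsto_of_tendsto' l3 ((l1.const_mul (1 - t)).add (l2.const_mul t)) fun k => ?_
    have c := Real.log_le_log (p3 k)
      (h.opNorm_convex hα hbdd h' ht0 ht1 k hh (p1 k) (p2 k))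
    rw [Real.log_exp] at c
    unfold useq
    rw [← mul_div_assoc, ← mul_div_assoc, ← add_div]
    exact div_le_div_of_nonneg_right c (Nat.cast_nonneg k)
  · rw [spectralPotential_eq, spectralPotential_eq, spectralPotential_eq, limUnder_junk hbd,
      limUnder_junk fun hb => hbd (h'.useq_compare hα hbdd h p2 p1 hb),
      limUnder_junk fun hb => hbd (hh.useq_compare hα hbdd h p3 p1 hb)]
    apply le_of_eq
    ring

end
end
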